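/- Let m be a (local or global) minimum of G of type k and strength λ. Suppose ν has a finite second moment and that β > 2h(m)/b(m)². Then for μ-almost every realization h there exists A = A(m) > 0 such that for all 0 < a < A and every α with 1 − 1/(2(2k−1)) < α < 1, the sequence of conditional laws P_{n,β}^h( (S_n − n m)/n^α ∈ · | S_n/n ∈ [m−a, m+a] ) satisfies a moderate deviations principle with speed n^{1−2k(1−α)} and rate function I(x) = x²/(2σ²) with σ² = λ^{−1} − β^{−1} if k = 1, and I(x) = λ x^{2k}/(2k)! if k ≥ 2. -/

import Mathlib

open MeasureTheory ProbabilityTheory Real Filter Topology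
open scoped ENNReal NNReal

noncomputable section

/-- The value of a spin encoded as a Boolean. -/
def spin (b : Bool) : ℝ := if b then 1 else -1

/-- Total magnetization of a configuration. -/
def mag {n : ℕ} (σ : Fin n → Bool) : ℝ := ∑ i, spin (σ i)

/-- Gibbs weight of a configuration in the random field Curie-Weiss model. -/
def gibbsWeight (β : ℝ) (h : ℕ → ℝ) (n : ℕ) (σ : Fin n → Bool) : ℝ :=
  Real.exp (β / (2 * n) * (mag σ) ^ 2 + β * ∑ i : Fin n, h i * spin (σ i))

/-- The random field Curie-Weiss Gibbs measure on configurations. -/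
def gibbsMeasure (β : ℝ) (h : ℕ → ℝ) (n : ℕ) : Measure (Fin n → Bool) :=
  (ENNReal.ofReal (∑ σ : Fin n → Bool, gibbsWeight β h n σ))⁻¹ •
    ∑ σ : Fin n → Bool, ENNReal.ofReal (gibbsWeight β h n σ) • Measure.dirac σ

/-- `μ` is the infinite product of `ν` over `ℕ` (characterised by finite marginals). -/
def IsProductMeasure (ν : Measure ℝ) (μ : Measure (ℕ → ℝ)) : Prop :=
  ∀ n : ℕ, μ.map (fun h (i : Fin n) => h (i : ℕ)) = Measure.pi fun _ : Fin n => ν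

/-- extended logarithm, `elog 0 = ⊥`, `elog ⊤ = ⊤`. -/
def elog (x : ℝ≥0∞) : EReal :=
  if x = 0 then ⊥ else if x = ⊤ then ⊤ else ((Real.log x.toReal : ℝ) : EReal)

/-- A sequence of measures satisfies a large deviations principle with given speed and
rate function. -/
def HasLDP (P : ℕ → Measure ℝ) (speed : ℕ → ℝ) (I : ℝ → ℝ≥0∞) : Prop :=
  LowerSemicontinuous I ∧ (∀ c : ℝ, IsCompact {x : ℝ | I x ≤ ENNReal.ofReal c}) ∧
    ∀ C : Set ℝ, MeasurableSet C →
      -(⨅ x ∈ interior C, (I x : EReal)) ≤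
          liminf (fun n => ((((speed n)⁻¹ : ℝ) : EReal)) * elog (P n C)) atTop ∧
        limsup (fun n => ((((speed n)⁻¹ : ℝ) : EReal)) * elog (P n C)) atTop ≤
          -(⨅ x ∈ closure C, (I x : EReal))

/-- The function `G` of the random field Curie-Weiss model. -/
def G (β : ℝ) (ν : Measure ℝ) (x : ℝ) : ℝ :=
  β / 2 * x ^ 2 - ∫ h, Real.log (Real.cosh (β * (x + h))) ∂ν

/-- The finite-volume function `G_n^h`. -/
def Gn (β : ℝ) (h : ℕ → ℝ) (n : ℕ) (x : ℝ) : ℝ :=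
  β / 2 * x ^ 2 - (1 / n) * ∑ i : Fin n, Real.log (Real.cosh (β * (x + h i)))

/-- `m` is a (local or global) minimum of `G` of type `k` and strength `l`. -/
def IsMinOfType (β : ℝ) (ν : Measure ℝ) (m : ℝ) (k : ℕ) (l : ℝ) : Prop :=
  1 ≤ k ∧ 0 < l ∧ (∀ i : ℕ, 1 ≤ i → i ≤ 2 * k - 1 → iteratedDeriv i (G β ν) m = 0) ∧
    iteratedDeriv (2 * k) (G β ν) m = l

/-- The height of a minimum `m` of `G`. -/
def height (β : ℝ) (ν : Measure ℝ) (m : ℝ) : ℝ := G β ν m - ⨅ w, G β ν w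

/-- The broadness of a minimum `m` of `G`. -/
def broadness (β : ℝ) (ν : Measure ℝ) (m : ℝ) : ℝ :=
  sInf ((fun y => |y - m|) '' {y | G β ν y < G β ν m})

/-- The moderate deviations rate function. -/
def mdpRate (β l : ℝ) (k : ℕ) (x : ℝ) : ℝ≥0∞ :=
  if k = 1 then ENNReal.ofReal (x ^ 2 / (2 * (l⁻¹ - β⁻¹)))
  else ENNReal.ofReal (l * x ^ (2 * k) / (Nat.factorial (2 * k)))

/-- The polynomial `P_{2k}`. -/
def P2k (l : ℝ) (k : ℕ) (s : ℝ) : ℝ :=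
  l / (2 * (Nat.factorial (2 * k))) * s ^ (2 * k) - ∑ i ∈ Finset.Icc 1 (2 * k - 1), |s| ^ i


/-!
Write `L_n` for the empirical measure of the field, so that `Gn β h n = G β L_n`. For every `t`,
`(mag σ) ^ 2 / n` is the linear function `2 t * mag σ - n t ^ 2` of the magnetization plus the
square `n (mag σ / n - t) ^ 2`. Near `mag σ / n = x` the Gibbs weight is therefore that of
*independent* spins in the field `t + h i`, whose total weight is `2 ^ n exp (-n Gn(t))`, times
`exp (n β (x - t) ^ 2 / 2)`. This bounds the weight of `{mag σ / n = x}` from above for any `t`; if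
`t` is chosen such that the independent spins have mean `meanTanh β L_n t ≈ x`, Hoeffding's
inequality turns it into a lower bound of the same exponential order. For `x = m + b s` at a small
scale `b`, the right choice is `t = m + c b s` with `c⁻¹` the derivative of `meanTanh β ν` at `m`,
and the exponent becomes `-n b ^ (2 k) ρ s ^ (2 k)` by Taylor's formula for `G`.

The fluctuations of `h` enter through `Gn - G` only. Since its increments over distance `b` are `b`
times a fluctuation of order `n ^ (-1 / 2)` of `meanTanh β L_n`, they are negligible against
`b ^ (2 k)` if `b ^ (2 k - 1)` is of larger polynomial order than `n ^ (-1 / 2)`, which is the lower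
bound on `α` for `b = n ^ (α - 1)`.
-/

section Tanh

lemma hasDerivAt_tanh (x : ℝ) : HasDerivAt tanh (1 - tanh x ^ 2) x := by
  have h := (hasDerivAt_sinh x).div (hasDerivAt_cosh x) (cosh_pos x).ne'
  rw [show sinh / cosh = tanh from funext fun y => (tanh_eq_sinh_div_cosh y).symm] at h
  refine h.congr_deriv ?_
  rw [tanh_eq_sinh_div_cosh]
  have := (cosh_pos x).ne'
  field_simp

lemma continuous_tanh : Continuous tanh :=
  continuous_iff_continuousAt.2 fun x => (hasDerivAt_tanh x).continuousAt

lemma abs_tanh_sub_tanh_le (x y : ℝ) : |tanh x - tanh y| ≤ |x - y| := by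
  have h := convex_univ.norm_image_sub_le_of_norm_hasDerivWithin_le (C := 1)
    (fun x _ => (hasDerivAt_tanh x).hasDerivWithinAt)
    (fun x _ => by
      rw [norm_eq_abs, abs_le]
      constructor <;> linarith [sq_nonneg (tanh x), tanh_sq_lt_one x])
    (Set.mem_univ y) (Set.mem_univ x)
  simpa only [norm_eq_abs, one_mul] using h

lemma hasDerivAt_log_cosh (x : ℝ) : HasDerivAt (fun x => log (cosh x)) (tanh x) x := by
  rw [tanh_eq_sinh_div_cosh]
  exact (hasDerivAt_cosh x).log (cosh_pos x).ne'

lemma continuous_log_cosh : Continuous fun x => log (cosh x) :=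
  continuous_iff_continuousAt.2 fun x => (hasDerivAt_log_cosh x).continuousAt

lemma abs_log_cosh_le_abs (x : ℝ) : |log (cosh x)| ≤ |x| := by
  rw [abs_of_nonneg (log_nonneg (one_le_cosh x)), log_le_iff_le_exp (cosh_pos x), ← cosh_abs,
    cosh_eq]
  linarith [exp_le_exp.2 (neg_le_self (abs_nonneg x))]

lemma log_cosh_add_le (y r : ℝ) :
    log (cosh (y + r)) ≤ log (cosh y) + r * tanh y + r ^ 2 / 2 := by
  have hderiv (z : ℝ) :
      HasDerivAt (fun z => z ^ 2 / 2 - log (cosh z)) (z - tanh z) z := by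
    refine (((hasDerivAt_pow 2 z).div_const 2).sub (hasDerivAt_log_cosh z)).congr_deriv ?_
    simp
  have hmono : Monotone fun z => z - tanh z := fun a b hab => by
    have := (abs_le.1 (abs_tanh_sub_tanh_le b a)).2
    rw [abs_of_nonneg (sub_nonneg.2 hab)] at this
    linarith
  have hconvex : ConvexOn ℝ Set.univ fun z => z ^ 2 / 2 - log (cosh z) := by
    refine Monotone.convexOn_univ_of_deriv (fun z => (hderiv z).differentiableAt) ?_
    rwa [show deriv (fun z => z ^ 2 / 2 - log (cosh z)) = fun z => z - tanh z from
      funext fun z => (hderiv z).deriv]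
  have htangent : y ^ 2 / 2 - log (cosh y) + (y - tanh y) * r
      ≤ (y + r) ^ 2 / 2 - log (cosh (y + r)) := by
    rcases lt_trichotomy r 0 with hr | rfl | hr
    · have := hconvex.slope_le_of_hasDerivAt (Set.mem_univ (y + r)) (Set.mem_univ y)
        (by linarith) (hderiv y)
      rw [slope_def_field, div_le_iff₀ (by linarith)] at this
      linarith
    · simp
    · have := hconvex.le_slope_of_hasDerivAt (Set.mem_univ y) (Set.mem_univ (y + r))
        (by linarith) (hderiv y)
      rw [slope_def_field, le_div_iff₀ (by linarith)] at this
      linarith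
  linarith

end Tanh

section MeanField

/-- The mean magnetization `x ↦ 𝔼 tanh (β (x + h))` of a single spin in the external field
`x + h`, where `h` has distribution `ν`. -/
def meanTanh (β : ℝ) (ν : Measure ℝ) (x : ℝ) : ℝ := ∫ h, tanh (β * (x + h)) ∂ν

/-- The mean free energy `x ↦ 𝔼 log (cosh (β (x + h)))` of a single spin in the external field
`x + h`, where `h` has distribution `ν`. -/
def meanLogCosh (β : ℝ) (ν : Measure ℝ) (x : ℝ) : ℝ := ∫ h, log (cosh (β * (x + h))) ∂ν

lemma G_eq_sub_meanLogCosh (β : ℝ) (ν : Measure ℝ) (x : ℝ) :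
    G β ν x = β / 2 * x ^ 2 - meanLogCosh β ν x := rfl

variable {β : ℝ} {ν : Measure ℝ}

lemma hasDerivAt_const_mul_add_const (β h x : ℝ) : HasDerivAt (fun x => β * (x + h)) β x := by
  simpa using ((hasDerivAt_id x).add_const h).const_mul β

lemma exists_abs_eval_tanh_le (p : Polynomial ℝ) : ∃ C, ∀ x, |p.eval (tanh x)| ≤ C := by
  obtain ⟨C, hC⟩ := (isCompact_Icc (a := (-1 : ℝ)) (b := 1)).exists_bound_of_continuousOn
    p.continuous.continuousOn
  exact ⟨C, fun x => hC _ (abs_le.1 (abs_tanh_lt_one x).le)⟩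

lemma integrable_eval_tanh [IsFiniteMeasure ν] (p : Polynomial ℝ) (x : ℝ) :
    Integrable (fun h => p.eval (tanh (β * (x + h)))) ν := by
  obtain ⟨C, hC⟩ := exists_abs_eval_tanh_le p
  refine .of_bound ?_ C (.of_forall fun h => hC _)
  exact (p.continuous.comp (continuous_tanh.comp (by fun_prop))).aestronglyMeasurable

lemma hasDerivAt_integral_eval_tanh [IsFiniteMeasure ν] (p : Polynomial ℝ) (x : ℝ) :
    HasDerivAt (fun x => ∫ h, p.eval (tanh (β * (x + h))) ∂ν)
      (∫ h, (.C β * (p.derivative * (1 - .X ^ 2)) : Polynomial ℝ).eval (tanh (β * (x + h))) ∂ν)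
      x := by
  set q : Polynomial ℝ := .C β * (p.derivative * (1 - .X ^ 2)) with hq
  obtain ⟨C, hC⟩ := exists_abs_eval_tanh_le q
  refine (hasDerivAt_integral_of_dominated_loc_of_deriv_le univ_mem
    (.of_forall fun y => (integrable_eval_tanh p y).aestronglyMeasurable)
    (integrable_eval_tanh p x) (integrable_eval_tanh q x).aestronglyMeasurable
    (.of_forall fun h y _ => hC (β * (y + h))) (integrable_const C)
    (.of_forall fun h y _ => ?_)).2
  refine ((p.hasDerivAt _).comp y ((hasDerivAt_tanh _).comp y
    (hasDerivAt_const_mul_add_const β h y))).congr_deriv ?_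
  simp only [hq, Function.comp_apply, Polynomial.eval_mul, Polynomial.eval_C, Polynomial.eval_sub,
    Polynomial.eval_one, Polynomial.eval_pow, Polynomial.eval_X]
  ring

-- Since `tanh' = 1 - tanh²`, polynomials in `tanh` are stable under differentiation.
lemma contDiff_integral_eval_tanh [IsFiniteMeasure ν] (n : ℕ) (p : Polynomial ℝ) :
    ContDiff ℝ n fun x => ∫ h, p.eval (tanh (β * (x + h))) ∂ν := by
  induction n generalizing p with
  | zero =>
    exact contDiff_zero.2 (continuous_iff_continuousAt.2 fun x =>
      (hasDerivAt_integral_eval_tanh p x).continuousAt)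
  | succ n ih =>
    rw [Nat.cast_succ, contDiff_succ_iff_deriv]
    refine ⟨fun x => (hasDerivAt_integral_eval_tanh p x).differentiableAt, by simp, ?_⟩
    rw [show deriv (fun x => ∫ h, p.eval (tanh (β * (x + h))) ∂ν) = _ from
      funext fun x => (hasDerivAt_integral_eval_tanh p x).deriv]
    exact ih _

lemma integrable_tanh [IsFiniteMeasure ν] (x : ℝ) :
    Integrable (fun h => tanh (β * (x + h))) ν := by
  simpa only [Polynomial.eval_X] using integrable_eval_tanh (ν := ν) .X x

lemma contDiff_meanTanh [IsFiniteMeasure ν] (n : ℕ) : ContDiff ℝ n (meanTanh β ν) := by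
  unfold meanTanh
  simpa only [Polynomial.eval_X] using contDiff_integral_eval_tanh (ν := ν) n .X

lemma hasDerivAt_meanTanh [IsFiniteMeasure ν] (x : ℝ) :
    HasDerivAt (meanTanh β ν) (β * ∫ h, (1 - tanh (β * (x + h)) ^ 2) ∂ν) x := by
  have h := hasDerivAt_integral_eval_tanh (β := β) (ν := ν) .X x
  simp only [Polynomial.eval_X, Polynomial.eval_mul, Polynomial.eval_C, Polynomial.derivative_X,
    one_mul, Polynomial.eval_sub, Polynomial.eval_one, Polynomial.eval_pow] at h
  rwa [← integral_const_mul]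

lemma integral_one_sub_tanh_sq_pos [IsFiniteMeasure ν] [NeZero ν] (x : ℝ) :
    0 < ∫ h, (1 - tanh (β * (x + h)) ^ 2) ∂ν := by
  have hpos (h : ℝ) : 0 < 1 - tanh (β * (x + h)) ^ 2 := sub_pos.2 (tanh_sq_lt_one _)
  have hint : Integrable (fun h => 1 - tanh (β * (x + h)) ^ 2) ν := by
    have h := integrable_eval_tanh (β := β) (ν := ν) (1 - Polynomial.X ^ 2) x
    simp only [Polynomial.eval_sub, Polynomial.eval_one, Polynomial.eval_pow,
      Polynomial.eval_X] at h
    exact h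
  rw [integral_pos_iff_support_of_nonneg (fun h => (hpos h).le) hint,
    Set.eq_univ_of_forall fun h => Function.mem_support.2 (hpos h).ne']
  exact NeZero.pos (ν Set.univ)

lemma integrable_log_cosh [IsFiniteMeasure ν] (hν : Integrable (fun x : ℝ => x) ν) (x : ℝ) :
    Integrable (fun h => log (cosh (β * (x + h)))) ν := by
  refine (((integrable_const x).add hν).const_mul β).mono ?_ (.of_forall fun h => ?_)
  · exact (continuous_log_cosh.comp (by fun_prop)).aestronglyMeasurable
  · exact abs_log_cosh_le_abs _

lemma hasDerivAt_meanLogCosh [IsFiniteMeasure ν] (hν : Integrable (fun x : ℝ => x) ν) (x : ℝ) :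
    HasDerivAt (meanLogCosh β ν) (β * meanTanh β ν x) x := by
  rw [meanTanh, ← integral_const_mul]
  refine (hasDerivAt_integral_of_dominated_loc_of_deriv_le
    (F := fun x h => log (cosh (β * (x + h)))) (F' := fun x h => β * tanh (β * (x + h))) univ_mem
    (.of_forall fun y => (integrable_log_cosh hν y).aestronglyMeasurable)
    (integrable_log_cosh hν x) ((integrable_tanh x).const_mul β).aestronglyMeasurable
    (.of_forall fun h y _ => ?_) (integrable_const |β|) (.of_forall fun h y _ => ?_)).2
  · rw [norm_eq_abs, abs_mul]
    exact mul_le_of_le_one_right (abs_nonneg β) (abs_tanh_lt_one _).le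
  · rw [mul_comm β]
    exact (hasDerivAt_log_cosh _).comp y (hasDerivAt_const_mul_add_const β h y)

lemma meanLogCosh_add_le [IsProbabilityMeasure ν] (hν : Integrable (fun x : ℝ => x) ν)
    (x u : ℝ) :
    meanLogCosh β ν (x + u) ≤
      meanLogCosh β ν x + β * u * meanTanh β ν x + (β * u) ^ 2 / 2 := by
  have hint₁ : Integrable (fun h => β * u * tanh (β * (x + h))) ν :=
    (integrable_tanh x).const_mul _
  have hint₂ : Integrable (fun h => log (cosh (β * (x + h))) + β * u * tanh (β * (x + h))) ν :=
    (integrable_log_cosh hν x).add hint₁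
  calc meanLogCosh β ν (x + u)
      ≤ ∫ h, (log (cosh (β * (x + h))) + β * u * tanh (β * (x + h)) + (β * u) ^ 2 / 2) ∂ν := by
        refine integral_mono (integrable_log_cosh hν _) (hint₂.add (integrable_const _))
          fun h => ?_
        rw [add_right_comm x u h, mul_add β (x + h)]
        exact log_cosh_add_le _ _
    _ = meanLogCosh β ν x + β * u * meanTanh β ν x + (β * u) ^ 2 / 2 := by
        rw [integral_add hint₂ (integrable_const _),
          integral_add (integrable_log_cosh hν x) hint₁, integral_const_mul]
        simp [meanLogCosh, meanTanh]

lemma hasDerivAt_G [IsFiniteMeasure ν] (hν : Integrable (fun x : ℝ => x) ν) (x : ℝ) :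
    HasDerivAt (G β ν) (β * x - β * meanTanh β ν x) x := by
  refine (((hasDerivAt_pow 2 x).const_mul (β / 2)).sub
    (hasDerivAt_meanLogCosh hν x)).congr_deriv ?_
  push_cast
  ring

lemma deriv_G [IsFiniteMeasure ν] (hν : Integrable (fun x : ℝ => x) ν) :
    deriv (G β ν) = fun x => β * x - β * meanTanh β ν x :=
  funext fun x => (hasDerivAt_G hν x).deriv

lemma contDiff_G [IsFiniteMeasure ν] (hν : Integrable (fun x : ℝ => x) ν) (n : ℕ) :
    ContDiff ℝ n (G β ν) := by
  suffices h : ContDiff ℝ (n + 1) (G β ν) from h.of_le le_self_add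
  rw [contDiff_succ_iff_deriv]
  refine ⟨fun x => (hasDerivAt_G hν x).differentiableAt, by simp, ?_⟩
  rw [deriv_G hν]
  have := contDiff_meanTanh (β := β) (ν := ν) n
  fun_prop

lemma iteratedDeriv_two_G [IsFiniteMeasure ν] (hν : Integrable (fun x : ℝ => x) ν) (x : ℝ) :
    iteratedDeriv 2 (G β ν) x = β - β * deriv (meanTanh β ν) x := by
  rw [iteratedDeriv_succ, iteratedDeriv_one, deriv_G hν]
  have hdiff := (hasDerivAt_meanTanh (β := β) (ν := ν) x).differentiableAt.hasDerivAt
  exact ((hasDerivAt_const_mul β).sub (hdiff.const_mul β)).deriv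

/- Only the field average enters the derivative of `G`, so closeness of the mean magnetizations
gives closeness of the increments, although the values of `G` themselves may be far apart. -/
lemma abs_G_sub_sub_G_sub_le {ν₁ ν₂ : Measure ℝ} [IsFiniteMeasure ν₁] [IsFiniteMeasure ν₂]
    (hν₁ : Integrable (fun x : ℝ => x) ν₁) (hν₂ : Integrable (fun x : ℝ => x) ν₂)
    {s : Set ℝ} (hs : Convex ℝ s) {η : ℝ}
    (hη : ∀ t ∈ s, |meanTanh β ν₁ t - meanTanh β ν₂ t| ≤ η) {x y : ℝ} (hx : x ∈ s) (hy : y ∈ s) :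
    |(G β ν₁ y - G β ν₁ x) - (G β ν₂ y - G β ν₂ x)| ≤ |β| * η * |y - x| := by
  have h := hs.norm_image_sub_le_of_norm_hasDerivWithin_le (C := |β| * η)
    (fun t _ => ((hasDerivAt_G (β := β) hν₁ t).sub (hasDerivAt_G hν₂ t)).hasDerivWithinAt)
    (fun t ht => by
      rw [show β * t - β * meanTanh β ν₁ t - (β * t - β * meanTanh β ν₂ t)
        = -(β * (meanTanh β ν₁ t - meanTanh β ν₂ t)) by ring, norm_neg, norm_mul]
      exact mul_le_mul_of_nonneg_left (hη t ht) (norm_nonneg β)) hx hy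
  rwa [Pi.sub_apply, Pi.sub_apply, sub_sub_sub_comm] at h

end MeanField

section EmpiricalMeasure

/-- The empirical distribution `n⁻¹ ∑ i < n, δ_{h i}` of the first `n` external fields; it is the
zero measure for `n = 0`. -/
def empiricalMeasure (h : ℕ → ℝ) (n : ℕ) : Measure ℝ :=
  (n : ℝ≥0)⁻¹ • ∑ i : Fin n, Measure.dirac (h i)

variable (h : ℕ → ℝ) (n : ℕ)

instance : IsFiniteMeasure (empiricalMeasure h n) := by
  unfold empiricalMeasure
  infer_instance

instance [NeZero n] : IsProbabilityMeasure (empiricalMeasure h n) where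
  measure_univ := by
    simp [empiricalMeasure, ENNReal.smul_def, ENNReal.coe_inv (NeZero.ne (n : ℝ≥0)),
      ENNReal.inv_mul_cancel (NeZero.ne (n : ℝ≥0∞)) (ENNReal.natCast_ne_top n)]

lemma integrable_empiricalMeasure (f : ℝ → ℝ) : Integrable f (empiricalMeasure h n) :=
  .smul_measure_nnreal (integrable_finsetSum_measure.2 fun _ _ => integrable_dirac (by simp))

lemma integral_empiricalMeasure (f : ℝ → ℝ) :
    ∫ x, f x ∂empiricalMeasure h n = (n : ℝ)⁻¹ * ∑ i : Fin n, f (h i) := by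
  rw [empiricalMeasure, integral_smul_nnreal_measure,
    integral_finsetSum_measure fun _ _ => integrable_dirac (by simp)]
  simp [NNReal.smul_def]

lemma mul_integral_empiricalMeasure (f : ℝ → ℝ) :
    n * ∫ x, f x ∂empiricalMeasure h n = ∑ i : Fin n, f (h i) := by
  rcases eq_or_ne n 0 with rfl | hn
  · simp
  · rw [integral_empiricalMeasure, mul_inv_cancel_left₀ (Nat.cast_ne_zero.2 hn)]

lemma Gn_eq_G_empiricalMeasure (β : ℝ) :
    Gn β h n = G β (empiricalMeasure h n) := by
  funext x
  rw [Gn, G, integral_empiricalMeasure, one_div]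

end EmpiricalMeasure

section TotalWeight

variable {ι : Type*} [Fintype ι]

/-- The mass that the weight function `w` on a finite type gives to the set `s`. -/
def totalWeight (w : ι → ℝ) (s : Set ι) : ℝ := ∑ σ, s.indicator w σ

variable {w w' : ι → ℝ} {s t : Set ι}

lemma totalWeight_univ (w : ι → ℝ) : totalWeight w .univ = ∑ σ, w σ := by
  rw [totalWeight, Set.indicator_univ]

lemma totalWeight_nonneg (hw : 0 ≤ w) (s : Set ι) : 0 ≤ totalWeight w s :=
  Finset.sum_nonneg fun _ _ => Set.indicator_nonneg (fun _ _ => hw _) _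

lemma totalWeight_mono (h : ∀ σ ∈ s, w σ ≤ w' σ) : totalWeight w s ≤ totalWeight w' s :=
  Finset.sum_le_sum fun _ _ => Set.indicator_le_indicator' (h _)

lemma totalWeight_mono_set (hw : 0 ≤ w) (hst : s ⊆ t) : totalWeight w s ≤ totalWeight w t :=
  Finset.sum_le_sum fun σ _ => Set.indicator_le_indicator_apply_of_subset hst (hw σ)

lemma totalWeight_const_mul (c : ℝ) (w : ι → ℝ) (s : Set ι) :
    totalWeight (fun σ => c * w σ) s = c * totalWeight w s := by
  simp only [totalWeight, Set.indicator_const_mul, Finset.mul_sum]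

lemma totalWeight_union_le (hw : 0 ≤ w) (s t : Set ι) :
    totalWeight w (s ∪ t) ≤ totalWeight w s + totalWeight w t := by
  rw [totalWeight, totalWeight, totalWeight, ← Finset.sum_add_distrib]
  refine Finset.sum_le_sum fun σ _ => ?_
  have := congrFun (Set.indicator_union_add_inter w s t) σ
  simp only [Pi.add_apply] at this
  linarith [Set.indicator_nonneg (fun σ (_ : σ ∈ s ∩ t) => hw σ) σ]

lemma totalWeight_le_card_image_mul {α : Type*} [DecidableEq α] (f : ι → α) {c : ℝ}
    (h : ∀ σ ∈ s, totalWeight w (s ∩ f ⁻¹' {f σ}) ≤ c) (hc : 0 ≤ c) :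
    totalWeight w s ≤ (Finset.univ.image f).card * c := by
  rw [totalWeight, ← Finset.sum_fiberwise_of_maps_to
    (fun σ _ => Finset.mem_image_of_mem f (Finset.mem_univ σ)), ← nsmul_eq_mul]
  refine Finset.sum_le_card_nsmul _ _ _ fun y _ => ?_
  have hfiber : ∑ σ with f σ = y, s.indicator w σ = totalWeight w (s ∩ f ⁻¹' {y}) := by
    rw [totalWeight, Finset.sum_filter]
    refine Finset.sum_congr rfl fun σ _ => ?_
    rw [Set.inter_comm, ← Set.indicator_indicator]
    by_cases hσ : f σ = y <;> simp [hσ]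
  rw [hfiber]
  rcases (s ∩ f ⁻¹' {y}).eq_empty_or_nonempty with hempty | ⟨σ, hσ, rfl⟩
  · simpa [hempty, totalWeight] using hc
  · exact h σ hσ

end TotalWeight

section TiltedWeight

/-- The weight of independent spins in the homogeneous field `t` and the external fields `h`.
Linearizing the quadratic interaction of the Curie–Weiss model at `t` leads to this weight. -/
def tiltedWeight (β : ℝ) (h : ℕ → ℝ) (n : ℕ) (t : ℝ) (σ : Fin n → Bool) : ℝ :=
  exp (β * ∑ i : Fin n, (t + h i) * spin (σ i))

lemma tiltedWeight_nonneg (β : ℝ) (h : ℕ → ℝ) (n : ℕ) (t : ℝ) : 0 ≤ tiltedWeight β h n t :=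
  fun _ => (exp_pos _).le

lemma gibbsWeight_nonneg (β : ℝ) (h : ℕ → ℝ) (n : ℕ) : 0 ≤ gibbsWeight β h n :=
  fun _ => (exp_pos _).le

lemma card_image_mag_le (n : ℕ) :
    ((Finset.univ : Finset (Fin n → Bool)).image mag).card ≤ n + 1 := by
  have hsubset : (Finset.univ : Finset (Fin n → Bool)).image mag ⊆
      (Finset.range (n + 1)).image fun j : ℕ => 2 * (j : ℝ) - n := by
    refine Finset.image_subset_iff.2 fun σ _ => Finset.mem_image.2
      ⟨(Finset.univ.filter fun i => σ i = true).card, ?_, ?_⟩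
    · exact Finset.mem_range_succ_iff.2 ((Finset.card_filter_le _ _).trans (by simp))
    · have hspin (i : Fin n) : spin (σ i) = 2 * (if σ i = true then (1 : ℝ) else 0) - 1 := by
        unfold spin
        split_ifs <;> norm_num
      rw [mag, Finset.sum_congr rfl fun i _ => hspin i, Finset.sum_sub_distrib, ← Finset.mul_sum,
        Finset.sum_boole]
      simp
  exact (Finset.card_le_card hsubset).trans (Finset.card_image_le.trans (by simp))

variable {β : ℝ} {h : ℕ → ℝ} {n : ℕ}

lemma totalWeight_tiltedWeight_univ (t : ℝ) :
    totalWeight (tiltedWeight β h n t) .univ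
      = 2 ^ n * exp (n * meanLogCosh β (empiricalMeasure h n) t) := by
  have hspin (i : Fin n) :
      ∑ b : Bool, exp (β * ((t + h i) * spin b)) = 2 * exp (log (cosh (β * (t + h i)))) := by
    rw [exp_log (cosh_pos _), Fintype.sum_bool, cosh_eq]
    simp only [spin, if_true, Bool.false_eq_true, if_false]
    ring_nf
  calc totalWeight (tiltedWeight β h n t) .univ
      = ∑ σ : Fin n → Bool, ∏ i : Fin n, exp (β * ((t + h i) * spin (σ i))) := by
        simp only [totalWeight_univ, tiltedWeight, Finset.mul_sum, exp_sum]
    _ = ∏ i : Fin n, ∑ b : Bool, exp (β * ((t + h i) * spin b)) :=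
        (Fintype.prod_sum fun (i : Fin n) b => exp (β * ((t + h i) * spin b))).symm
    _ = 2 ^ n * exp (n * meanLogCosh β (empiricalMeasure h n) t) := by
        rw [meanLogCosh, mul_integral_empiricalMeasure, exp_sum]
        simp only [hspin, Finset.prod_mul_distrib, Finset.prod_const, Finset.card_univ,
          Fintype.card_fin]

lemma exp_mul_totalWeight_tiltedWeight_univ (t : ℝ) :
    exp (-(n * (β / 2 * t ^ 2))) * totalWeight (tiltedWeight β h n t) .univ
      = 2 ^ n * exp (-(n * Gn β h n t)) := by
  rw [totalWeight_tiltedWeight_univ, mul_left_comm, ← exp_add, Gn_eq_G_empiricalMeasure,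
    G_eq_sub_meanLogCosh]
  congr 2
  ring

lemma tiltedWeight_add (t u : ℝ) (σ : Fin n → Bool) :
    tiltedWeight β h n (t + u) σ = exp (β * u * mag σ) * tiltedWeight β h n t σ := by
  rw [tiltedWeight, tiltedWeight, ← exp_add, mag, mul_assoc, ← mul_add, Finset.mul_sum _ _ u,
    ← Finset.sum_add_distrib]
  congr 2
  exact Finset.sum_congr rfl fun i _ => by ring

variable [NeZero n]

-- This is `x² = (x - t)² + 2 t x - t²` for the magnetization per spin `x`.
lemma gibbsWeight_eq_mul_tiltedWeight (t : ℝ) (σ : Fin n → Bool) :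
    gibbsWeight β h n σ = exp (n * (β / 2 * (mag σ / n - t) ^ 2)) *
      (exp (-(n * (β / 2 * t ^ 2))) * tiltedWeight β h n t σ) := by
  have hn : (n : ℝ) ≠ 0 := NeZero.ne _
  have hfields : tiltedWeight β h n t σ = exp (β * t * mag σ) * tiltedWeight β h n 0 σ := by
    rw [← tiltedWeight_add, zero_add]
  rw [hfields, gibbsWeight, tiltedWeight, ← exp_add, ← exp_add, ← exp_add]
  congr 1
  simp only [zero_add]
  field_simp
  ring

lemma totalWeight_tiltedWeight_le (hβ : β ≠ 0) (t : ℝ) {E : Set (Fin n → Bool)} {p y : ℝ}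
    (hE : ∀ σ ∈ E, 0 ≤ p * (mag σ / n - y)) :
    totalWeight (tiltedWeight β h n t) E ≤
      exp (n * (p * (meanTanh β (empiricalMeasure h n) t - y) + p ^ 2 / 2)) *
        totalWeight (tiltedWeight β h n t) .univ := by
  have hn : (0 : ℝ) < n := Nat.cast_pos.2 (NeZero.pos n)
  have hp : β * (p / β) = p := mul_div_cancel₀ p hβ
  calc totalWeight (tiltedWeight β h n t) E
      ≤ totalWeight (fun σ => exp (-(n * (p * y))) * tiltedWeight β h n (t + p / β) σ) E := by
        refine totalWeight_mono fun σ hσ => ?_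
        rw [tiltedWeight_add, hp, ← mul_assoc, ← exp_add]
        refine le_mul_of_one_le_left (tiltedWeight_nonneg β h n t σ) (one_le_exp ?_)
        have hshift : n * (p * (mag σ / n - y)) = -(n * (p * y)) + p * mag σ := by
          field_simp
          ring
        rw [← hshift]
        exact mul_nonneg hn.le (hE σ hσ)
    _ ≤ exp (-(n * (p * y))) * totalWeight (tiltedWeight β h n (t + p / β)) .univ := by
        rw [totalWeight_const_mul]
        gcongr
        exact totalWeight_mono_set (tiltedWeight_nonneg β h n _) (Set.subset_univ E)
    _ ≤ exp (-(n * (p * y))) * (2 ^ n * exp (n * (meanLogCosh β (empiricalMeasure h n) t +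
          p * meanTanh β (empiricalMeasure h n) t + p ^ 2 / 2))) := by
        have := meanLogCosh_add_le (β := β) (integrable_empiricalMeasure h n _) t (p / β)
        rw [hp] at this
        rw [totalWeight_tiltedWeight_univ]
        gcongr
    _ = exp (n * (p * (meanTanh β (empiricalMeasure h n) t - y) + p ^ 2 / 2)) *
          totalWeight (tiltedWeight β h n t) .univ := by
        rw [totalWeight_tiltedWeight_univ, mul_left_comm, ← exp_add, mul_left_comm _ (2 ^ n),
          ← exp_add]
        congr 2
        ring

-- The magnetization per spin is subgaussian under the tilted weight, with mean `meanTanh`.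
lemma half_totalWeight_tiltedWeight_le (hβ : β ≠ 0) {t y d : ℝ} (hd : 0 < d)
    (hy : |meanTanh β (empiricalMeasure h n) t - y| ≤ d / 2)
    (hnd : exp (-(n * d ^ 2 / 8)) ≤ 1 / 4) :
    totalWeight (tiltedWeight β h n t) .univ / 2 ≤
      totalWeight (tiltedWeight β h n t) {σ | |mag σ / n - y| < d} := by
  obtain ⟨hy_lower, hy_upper⟩ := abs_le.1 hy
  set T := meanTanh β (empiricalMeasure h n) t
  set W := totalWeight (tiltedWeight β h n t)
  have hW (E : Set (Fin n → Bool)) : 0 ≤ W E := totalWeight_nonneg (tiltedWeight_nonneg β h n t) E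
  have htail {E : Set (Fin n → Bool)} {p z : ℝ} (hE : ∀ σ ∈ E, 0 ≤ p * (mag σ / n - z))
      (hp : p * (T - z) + p ^ 2 / 2 ≤ -(d ^ 2 / 8)) : W E ≤ 1 / 4 * W .univ := by
    refine (totalWeight_tiltedWeight_le hβ t hE).trans
      (mul_le_mul_of_nonneg_right (le_trans ?_ hnd) (hW _))
    rw [exp_le_exp, mul_div_assoc, ← mul_neg]
    exact mul_le_mul_of_nonneg_left hp (Nat.cast_nonneg n)
  have hupper : W {σ | y + d ≤ mag σ / n} ≤ 1 / 4 * W .univ :=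
    htail (p := d / 2) (fun σ hσ => mul_nonneg (by positivity) (sub_nonneg.2 hσ))
      (by nlinarith)
  have hlower : W {σ | mag σ / n ≤ y - d} ≤ 1 / 4 * W .univ :=
    htail (p := -(d / 2)) (fun σ hσ => mul_nonneg_of_nonpos_of_nonpos (by linarith)
      (sub_nonpos.2 hσ)) (by nlinarith)
  have hcover : (Set.univ : Set (Fin n → Bool)) ⊆ {σ | |mag σ / n - y| < d} ∪
      ({σ | y + d ≤ mag σ / n} ∪ {σ | mag σ / n ≤ y - d}) := fun σ _ => by
    simp only [Set.mem_union, Set.mem_ofPred_eq, abs_lt]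
    grind
  have hsplit : W .univ ≤ W {σ | |mag σ / n - y| < d} +
      (W {σ | y + d ≤ mag σ / n} + W {σ | mag σ / n ≤ y - d}) :=
    (totalWeight_mono_set (tiltedWeight_nonneg β h n t) hcover).trans
      ((totalWeight_union_le (tiltedWeight_nonneg β h n t) _ _).trans
        (by gcongr; exact totalWeight_union_le (tiltedWeight_nonneg β h n t) _ _))
  linarith

lemma totalWeight_gibbsWeight_fiber_le {t y B : ℝ} (hB : β / 2 * (y / n - t) ^ 2 - Gn β h n t ≤ B)
    {E : Set (Fin n → Bool)} (hE : ∀ σ ∈ E, mag σ = y) :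
    totalWeight (gibbsWeight β h n) E ≤ 2 ^ n * exp (n * B) := by
  set c := exp (n * (β / 2 * (y / n - t) ^ 2)) * exp (-(n * (β / 2 * t ^ 2)))
  calc totalWeight (gibbsWeight β h n) E
      ≤ totalWeight (fun σ => c * tiltedWeight β h n t σ) E :=
        totalWeight_mono fun σ hσ => by
          rw [gibbsWeight_eq_mul_tiltedWeight t, hE σ hσ, ← mul_assoc]
    _ ≤ c * totalWeight (tiltedWeight β h n t) .univ := by
        rw [totalWeight_const_mul]
        gcongr
        exact totalWeight_mono_set (tiltedWeight_nonneg β h n t) (Set.subset_univ E)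
    _ = 2 ^ n * exp (n * (β / 2 * (y / n - t) ^ 2 - Gn β h n t)) := by
        rw [mul_assoc, exp_mul_totalWeight_tiltedWeight_univ, mul_left_comm, ← exp_add]
        congr 2
        ring
    _ ≤ 2 ^ n * exp (n * B) := by gcongr

lemma totalWeight_gibbsWeight_le {B : ℝ} {E : Set (Fin n → Bool)}
    (hE : ∀ σ ∈ E, ∃ t, β / 2 * (mag σ / n - t) ^ 2 - Gn β h n t ≤ B) :
    totalWeight (gibbsWeight β h n) E ≤ (n + 1) * (2 ^ n * exp (n * B)) := by
  refine (totalWeight_le_card_image_mul mag (c := 2 ^ n * exp (n * B)) (fun σ hσ => ?_)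
    (by positivity)).trans ?_
  · obtain ⟨t, ht⟩ := hE σ hσ
    exact totalWeight_gibbsWeight_fiber_le ht fun τ hτ => hτ.2
  · gcongr
    exact_mod_cast card_image_mag_le n

lemma le_totalWeight_gibbsWeight (hβ : β ≠ 0) {t y d B : ℝ} (hd : 0 < d)
    (hy : |meanTanh β (empiricalMeasure h n) t - y| ≤ d / 2)
    (hnd : exp (-(n * d ^ 2 / 8)) ≤ 1 / 4)
    (hB : ∀ x, |x - y| < d → B ≤ β / 2 * (x - t) ^ 2 - Gn β h n t) :
    2 ^ n * exp (n * B) / 2 ≤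
      totalWeight (gibbsWeight β h n) {σ | |mag σ / n - y| < d} := by
  set c := exp (n * (B + Gn β h n t)) * exp (-(n * (β / 2 * t ^ 2)))
  calc 2 ^ n * exp (n * B) / 2
      = c * (totalWeight (tiltedWeight β h n t) .univ / 2) := by
        rw [← mul_div_assoc, mul_assoc, exp_mul_totalWeight_tiltedWeight_univ, mul_left_comm,
          ← exp_add]
        congr 3
        ring
    _ ≤ c * totalWeight (tiltedWeight β h n t) {σ | |mag σ / n - y| < d} := by
        gcongr
        exact half_totalWeight_tiltedWeight_le hβ hd hy hnd
    _ ≤ totalWeight (gibbsWeight β h n) {σ | |mag σ / n - y| < d} := by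
        rw [← totalWeight_const_mul]
        refine totalWeight_mono fun σ hσ => ?_
        rw [gibbsWeight_eq_mul_tiltedWeight t, ← mul_assoc]
        refine mul_le_mul_of_nonneg_right (mul_le_mul_of_nonneg_right ?_ (exp_pos _).le)
          (tiltedWeight_nonneg β h n t σ)
        gcongr
        linarith [hB _ hσ]

end TiltedWeight

section Minimum

lemma isLittleO_sub_of_iteratedDeriv_eq_zero {f : ℝ → ℝ} {n : ℕ} {m : ℝ} (hn : n ≠ 0)
    (hf : ContDiff ℝ n f) (hzero : ∀ i, 1 ≤ i → i < n → iteratedDeriv i f m = 0) :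
    (fun x => f x - f m - iteratedDeriv n f m / n.factorial * (x - m) ^ n)
      =o[𝓝 m] fun x => (x - m) ^ n := by
  refine (taylor_isLittleO_univ (x₀ := m) hf).congr_left fun x => ?_
  rw [taylor_within_apply, Finset.sum_range_succ, Finset.sum_eq_single_of_mem 0]
  · simp [iteratedDerivWithin_univ]
    ring
  · exact Finset.mem_range.2 (Nat.pos_of_ne_zero hn)
  · intro i hi hi0
    rw [iteratedDerivWithin_univ, hzero i (Nat.one_le_iff_ne_zero.2 hi0) (Finset.mem_range.1 hi),
      smul_zero]

/-- The inverse of the derivative of `meanTanh` at a minimum of type `k` and strength `l`.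
Tilting by the field `m + c v`, where `c` is this slope, moves the mean magnetization per spin
from `m` to `m + v`, to first order in `v`. -/
def tiltSlope (β l : ℝ) (k : ℕ) : ℝ := if k = 1 then (1 - l / β)⁻¹ else 1

/-- The coefficient of `x ^ (2 * k)` in the rate function `mdpRate β l k`. The first term is the
cost `G` of the tilting field `m + c v`, where `c = tiltSlope β l k`, the second one the gain from
the quadratic interaction linearized there. -/
def rateCoeff (β l : ℝ) (k : ℕ) : ℝ :=
  l / (2 * k).factorial * tiltSlope β l k ^ (2 * k) - β / 2 * (1 - tiltSlope β l k) ^ 2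

lemma eq_one_or_tiltSlope_eq_one (β l : ℝ) (k : ℕ) : k = 1 ∨ tiltSlope β l k = 1 :=
  (eq_or_ne k 1).imp_right fun hk => if_neg hk

lemma rateCoeff_one {β l : ℝ} (hβ : 0 < β) (hl : 0 < l) (hlβ : l < β) :
    rateCoeff β l 1 = 1 / (2 * (l⁻¹ - β⁻¹)) := by
  have h_sub : β - l ≠ 0 := (sub_pos.2 hlβ).ne'
  have : 1 - l / β ≠ 0 := by
    rw [one_sub_div hβ.ne']
    exact div_ne_zero h_sub hβ.ne'
  simp only [rateCoeff, tiltSlope, if_true, mul_one, Nat.factorial_two]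
  rw [inv_sub_inv hl.ne' hβ.ne']
  field_simp
  push_cast
  ring

lemma rateCoeff_of_ne_one {β l : ℝ} {k : ℕ} (hk : k ≠ 1) :
    rateCoeff β l k = l / (2 * k).factorial := by
  simp [rateCoeff, tiltSlope, hk]

namespace IsMinOfType

variable {β m l : ℝ} {ν : Measure ℝ} {k : ℕ}

lemma meanTanh_eq [IsFiniteMeasure ν] (hmin : IsMinOfType β ν m k l) (hβ : β ≠ 0)
    (hν : Integrable (fun x : ℝ => x) ν) : meanTanh β ν m = m := by
  obtain ⟨hk, -, hzero, -⟩ := hmin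
  have hderiv := hzero 1 le_rfl (by omega)
  rw [iteratedDeriv_one, (hasDerivAt_G hν m).deriv, ← mul_sub] at hderiv
  linarith [(mul_eq_zero.1 hderiv).resolve_left hβ]

lemma strength_lt [IsFiniteMeasure ν] [NeZero ν] (hmin : IsMinOfType β ν m 1 l) (hβ : 0 < β)
    (hν : Integrable (fun x : ℝ => x) ν) : l < β := by
  have hsecond := hmin.2.2.2
  rw [mul_one, iteratedDeriv_two_G hν, (hasDerivAt_meanTanh m).deriv] at hsecond
  have := mul_pos hβ (mul_pos hβ (integral_one_sub_tanh_sq_pos (β := β) (ν := ν) m))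
  linarith

lemma hasDerivAt_meanTanh_inv_tiltSlope [IsFiniteMeasure ν] (hmin : IsMinOfType β ν m k l)
    (hβ : β ≠ 0) (hν : Integrable (fun x : ℝ => x) ν) :
    HasDerivAt (meanTanh β ν) (tiltSlope β l k)⁻¹ m := by
  obtain ⟨hk, -, hzero, hstrength⟩ := hmin
  suffices hslope : β - β * deriv (meanTanh β ν) m = β - β * (tiltSlope β l k)⁻¹ by
    rw [← mul_left_cancel₀ hβ (sub_right_injective hslope)]
    exact (hasDerivAt_meanTanh m).differentiableAt.hasDerivAt
  rw [← iteratedDeriv_two_G hν]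
  rcases eq_or_ne k 1 with rfl | hk1
  · rw [tiltSlope, if_pos rfl, inv_inv, mul_sub, mul_div_cancel₀ l hβ, mul_one, sub_sub_cancel]
    exact hstrength
  · rw [tiltSlope, if_neg hk1, inv_one, mul_one, sub_self]
    exact hzero 2 (by omega) (by omega)

lemma tiltSlope_ne_zero [IsFiniteMeasure ν] [NeZero ν] (hmin : IsMinOfType β ν m k l)
    (hβ : 0 < β) (hν : Integrable (fun x : ℝ => x) ν) : tiltSlope β l k ≠ 0 := by
  unfold tiltSlope
  split_ifs with hk
  · subst hk
    exact inv_ne_zero (sub_pos.2 ((div_lt_one hβ).2 (hmin.strength_lt hβ hν))).ne'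
  · exact one_ne_zero

lemma rateCoeff_pos [IsFiniteMeasure ν] [NeZero ν] (hmin : IsMinOfType β ν m k l) (hβ : 0 < β)
    (hν : Integrable (fun x : ℝ => x) ν) : 0 < rateCoeff β l k := by
  have hl := hmin.2.1
  rcases eq_or_ne k 1 with rfl | hk
  · have hlβ := hmin.strength_lt hβ hν
    rw [rateCoeff_one hβ hl hlβ]
    exact one_div_pos.2 (mul_pos two_pos (sub_pos.2 (inv_strictAnti₀ hl hlβ)))
  · rw [rateCoeff_of_ne_one hk]
    positivity

lemma mdpRate_eq [IsFiniteMeasure ν] [NeZero ν] (hmin : IsMinOfType β ν m k l) (hβ : 0 < β)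
    (hν : Integrable (fun x : ℝ => x) ν) :
    mdpRate β l k = fun x => ENNReal.ofReal (rateCoeff β l k * x ^ (2 * k)) := by
  funext x
  rcases eq_or_ne k 1 with rfl | hk
  · rw [mdpRate, if_pos rfl, rateCoeff_one hβ hmin.2.1 (hmin.strength_lt hβ hν), mul_one,
      one_div_mul_eq_div]
  · rw [mdpRate, if_neg hk, rateCoeff_of_ne_one hk, div_mul_eq_mul_div]

lemma isLittleO_G [IsFiniteMeasure ν] (hmin : IsMinOfType β ν m k l)
    (hν : Integrable (fun x : ℝ => x) ν) :
    (fun x => G β ν x - G β ν m - l / (2 * k).factorial * (x - m) ^ (2 * k))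
      =o[𝓝 m] fun x => (x - m) ^ (2 * k) := by
  obtain ⟨hk, -, hzero, hstrength⟩ := hmin
  rw [← hstrength]
  exact isLittleO_sub_of_iteratedDeriv_eq_zero (by omega) (contDiff_G hν _)
    fun i hi hik => hzero i hi (by omega)

end IsMinOfType

end Minimum

section Concentration

variable {ν : Measure ℝ} [IsProbabilityMeasure ν] {μ : Measure (ℕ → ℝ)}

namespace IsProductMeasure

lemma map_eval (hμ : IsProductMeasure ν μ) (i : ℕ) : μ.map (fun h => h i) = ν := by
  have hmap := (measurePreserving_eval (fun _ : Fin (i + 1) => ν) (Fin.last i)).map_eq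
  rwa [← hμ (i + 1), Measure.map_map (by fun_prop) (by fun_prop)] at hmap

lemma integral_comp_eval (hμ : IsProductMeasure ν μ) {f : ℝ → ℝ} (hf : Measurable f) (i : ℕ) :
    ∫ h, f (h i) ∂μ = ∫ y, f y ∂ν := by
  rw [← hμ.map_eval i, integral_map (measurable_pi_apply i).aemeasurable hf.aestronglyMeasurable]

variable [IsProbabilityMeasure μ]

lemma iIndepFun_eval (hμ : IsProductMeasure ν μ) (n : ℕ) :
    iIndepFun (fun (i : Fin n) (h : ℕ → ℝ) => h i) μ := by
  refine (iIndepFun_iff_map_fun_eq_pi_map (f := fun (i : Fin n) (h : ℕ → ℝ) => h i)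
    fun i => (measurable_pi_apply (i : ℕ)).aemeasurable).2 ?_
  rw [hμ n]
  exact congrArg Measure.pi (funext fun i => (hμ.map_eval i).symm)

lemma measureReal_le_integral_sub_le (hμ : IsProductMeasure ν μ) {f : ℝ → ℝ} (hf : Measurable f)
    (hf1 : ∀ y, |f y| ≤ 1) (n : ℕ) {x : ℝ} (hx : 0 ≤ x) :
    μ.real {h | x ≤ ∫ y, f y ∂empiricalMeasure h n - ∫ y, f y ∂ν} ≤ exp (-(n * x ^ 2 / 2)) := by
  set E := ∫ y, f y ∂ν
  have hsubgaussian (i : Fin n) : HasSubgaussianMGF (fun h : ℕ → ℝ => f (h i) - E) 1 μ := by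
    have := hasSubgaussianMGF_of_mem_Icc (μ := μ) (X := fun h : ℕ → ℝ => f (h i))
      (hf.comp (measurable_pi_apply (i : ℕ))).aemeasurable (.of_forall fun h => abs_le.1 (hf1 _))
    rw [hμ.integral_comp_eval hf] at this
    convert this using 1
    ext
    norm_num
  have hindep : iIndepFun (fun (i : Fin n) (h : ℕ → ℝ) => f (h i) - E) μ :=
    (hμ.iIndepFun_eval n).comp (fun _ y => f y - E) fun _ => hf.sub_const E
  calc μ.real {h | x ≤ ∫ y, f y ∂empiricalMeasure h n - E}
      ≤ μ.real {h | n * x ≤ ∑ i : Fin n, (f (h i) - E)} := by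
        refine measureReal_mono fun h hh => ?_
        have := mul_le_mul_of_nonneg_left hh (Nat.cast_nonneg (α := ℝ) n)
        rw [mul_sub, mul_integral_empiricalMeasure] at this
        simpa using this
    _ ≤ exp (-(n * x) ^ 2 / (2 * ((∑ _i : Fin n, 1 : ℝ≥0) : ℝ))) :=
        HasSubgaussianMGF.measure_sum_ge_le_of_iIndepFun hindep (fun i _ => hsubgaussian i)
          (by positivity)
    _ = exp (-(n * x ^ 2 / 2)) := by
        rcases eq_or_ne n 0 with rfl | hn
        · simp
        · congr 1
          simp
          field_simp

lemma measureReal_le_abs_integral_sub_le (hμ : IsProductMeasure ν μ) {f : ℝ → ℝ}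
    (hf : Measurable f) (hf1 : ∀ y, |f y| ≤ 1) (n : ℕ) {x : ℝ} (hx : 0 ≤ x) :
    μ.real {h | x ≤ |∫ y, f y ∂empiricalMeasure h n - ∫ y, f y ∂ν|} ≤
      2 * exp (-(n * x ^ 2 / 2)) := by
  have hpos := hμ.measureReal_le_integral_sub_le hf hf1 n hx
  have hneg := hμ.measureReal_le_integral_sub_le hf.neg (fun y => by simpa using hf1 y) n hx
  simp only [Pi.neg_apply, integral_neg, ← neg_sub'] at hneg
  calc μ.real {h | x ≤ |∫ y, f y ∂empiricalMeasure h n - ∫ y, f y ∂ν|}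
      = μ.real ({h | x ≤ ∫ y, f y ∂empiricalMeasure h n - ∫ y, f y ∂ν} ∪
          {h | x ≤ -(∫ y, f y ∂empiricalMeasure h n - ∫ y, f y ∂ν)}) := by
        simp only [le_abs, Set.ofPred_or]
    _ ≤ exp (-(n * x ^ 2 / 2)) + exp (-(n * x ^ 2 / 2)) :=
        (measureReal_union_le _ _).trans (add_le_add hpos hneg)
    _ = 2 * exp (-(n * x ^ 2 / 2)) := (two_mul _).symm

end IsProductMeasure

lemma exists_finset_net (a b : ℝ) : ∃ C : ℝ, ∀ n : ℕ, ∃ S : Finset ℝ,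
    S.card ≤ C * (n + 1) ∧ ∀ t ∈ Set.Icc a b, ∃ s ∈ S, |t - s| ≤ 1 / ((n : ℝ) + 1) := by
  refine ⟨|b - a| + 1, fun n => ?_⟩
  have hn : (0 : ℝ) < n + 1 := n.cast_add_one_pos
  refine ⟨(Finset.range (⌊|b - a| * (n + 1)⌋₊ + 1)).image fun j : ℕ => a + j / (n + 1), ?_,
    fun t ht => ⟨a + ⌊(t - a) * (n + 1)⌋₊ / (n + 1), Finset.mem_image_of_mem _ ?_, ?_⟩⟩
  · calc (((Finset.range (⌊|b - a| * (n + 1)⌋₊ + 1)).image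
          fun j : ℕ => a + j / ((n : ℝ) + 1)).card : ℝ)
        ≤ ⌊|b - a| * (n + 1)⌋₊ + 1 := by
          exact_mod_cast Finset.card_image_le.trans (Finset.card_range _).le
      _ ≤ |b - a| * (n + 1) + (n + 1) := by
          gcongr
          · exact Nat.floor_le (by positivity)
          · exact le_add_of_nonneg_left n.cast_nonneg
      _ = (|b - a| + 1) * (n + 1) := by ring
  · refine Finset.mem_range_succ_iff.2 (Nat.floor_le_floor ?_)
    gcongr
    exact (sub_le_sub_right ht.2 a).trans (le_abs_self _)
  · have hfloor := Nat.floor_le (mul_nonneg (sub_nonneg.2 ht.1) hn.le)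
    have hlt := Nat.lt_floor_add_one ((t - a) * (n + 1))
    rw [← sub_sub, abs_of_nonneg (sub_nonneg.2 ((div_le_iff₀ hn).2 hfloor)), sub_le_iff_le_add,
      ← add_div, le_div_iff₀ hn]
    linarith

lemma isLittleO_natCast_rpow_rpow {p q : ℝ} (hpq : p < q) :
    (fun n : ℕ => (n : ℝ) ^ p) =o[atTop] fun n : ℕ => (n : ℝ) ^ q := by
  refine Asymptotics.isLittleO_of_tendsto' ?_ ?_
  · filter_upwards [eventually_gt_atTop 0] with n hn h0
    exact absurd h0 (rpow_pos_of_pos (Nat.cast_pos.2 hn) q).ne'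
  · refine ((tendsto_rpow_neg_atTop (sub_pos.2 hpq)).comp tendsto_natCast_atTop_atTop).congr' ?_
    filter_upwards [eventually_gt_atTop 0] with n hn
    rw [Function.comp_apply, neg_sub, rpow_sub (Nat.cast_pos.2 hn)]

lemma isBigO_one_div_add_one :
    (fun n : ℕ => 1 / ((n : ℝ) + 1)) =O[atTop] fun n : ℕ => (n : ℝ) ^ (-1 : ℝ) := by
  refine .of_bound 1 ?_
  filter_upwards [eventually_gt_atTop 0] with n hn
  have : (0 : ℝ) < n := Nat.cast_pos.2 hn
  rw [norm_of_nonneg (by positivity), norm_of_nonneg (by positivity), one_mul, rpow_neg_one,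
    ← one_div]
  gcongr
  linarith

lemma summable_add_one_mul_exp_neg_rpow {p : ℝ} (hp : 0 < p) :
    Summable fun n : ℕ => ((n : ℝ) + 1) * exp (-((n : ℝ) ^ p / 2)) := by
  have hexp : (fun n : ℕ => exp (-((n : ℝ) ^ p / 2))) =O[atTop]
      fun n : ℕ => (n : ℝ) ^ (-3 : ℝ) := by
    refine (((isLittleO_exp_neg_mul_rpow_atTop one_half_pos (-3 / p)).comp_tendsto
      ((tendsto_rpow_atTop hp).comp tendsto_natCast_atTop_atTop)).isBigO).congr
      (fun n => ?_) fun n => ?_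
    · simp only [Function.comp_apply]
      ring_nf
    · simp only [Function.comp_apply]
      rw [← rpow_mul n.cast_nonneg, mul_div_cancel₀ _ hp.ne']
  have hlinear : (fun n : ℕ => (n : ℝ) + 1) =O[atTop] fun n : ℕ => (n : ℝ) := by
    refine .of_bound 2 ?_
    filter_upwards [eventually_ge_atTop 1] with n hn
    have : (1 : ℝ) ≤ n := by exact_mod_cast hn
    rw [norm_of_nonneg (by positivity), norm_of_nonneg (by positivity)]
    linarith
  refine summable_of_isBigO_nat (summable_nat_rpow.2 (by norm_num : (-2 : ℝ) < -1))
    ((hlinear.mul hexp).congr_right fun n => ?_)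
  rw [← rpow_one_add' n.cast_nonneg (by norm_num)]
  norm_num

lemma abs_integral_sub_integral_le {f : ℝ → ℝ → ℝ} {K : ℝ} (hint : ∀ t, Integrable (f t) ν)
    (hlip : ∀ s t y, |f s y - f t y| ≤ K * |s - t|) (s t : ℝ) :
    |∫ y, f s y ∂ν - ∫ y, f t y ∂ν| ≤ K * |s - t| := by
  rw [← integral_sub (hint s) (hint t)]
  simpa using norm_integral_le_of_norm_le_const (μ := ν)
    (f := fun y => f s y - f t y) (.of_forall fun y => hlip s t y)

namespace IsProductMeasure

variable [IsProbabilityMeasure μ] {f : ℝ → ℝ → ℝ}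

lemma ae_eventually_forall_mem_finset (hμ : IsProductMeasure ν μ) (hf : ∀ t, Measurable (f t))
    (hf1 : ∀ t y, |f t y| ≤ 1) {S : ℕ → Finset ℝ} {C : ℝ} (hS : ∀ n, (S n).card ≤ C * (n + 1))
    {q : ℝ} (hq : q < 1 / 2) :
    ∀ᵐ h ∂μ, ∀ᶠ n : ℕ in atTop, ∀ t ∈ S n,
      |∫ y, f t y ∂empiricalMeasure h n - ∫ y, f t y ∂ν| < (n : ℝ) ^ (-q) := by
  set bad : ℕ → ℝ → Set (ℕ → ℝ) := fun n t =>
    {h | (n : ℝ) ^ (-q) ≤ |∫ y, f t y ∂empiricalMeasure h n - ∫ y, f t y ∂ν|}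
  have hscale (n : ℕ) : (n : ℝ) * ((n : ℝ) ^ (-q)) ^ 2 = (n : ℝ) ^ (1 - 2 * q) := by
    rw [← rpow_mul_natCast n.cast_nonneg, ← rpow_one_add' n.cast_nonneg (by norm_num; linarith)]
    congr 1
    push_cast
    ring
  have hmeasure (n : ℕ) : μ.real (⋃ t ∈ S n, bad n t) ≤
      2 * C * ((n + 1) * exp (-((n : ℝ) ^ (1 - 2 * q) / 2))) := by
    calc μ.real (⋃ t ∈ S n, bad n t)
        ≤ ∑ t ∈ S n, μ.real (bad n t) := measureReal_biUnion_finset_le _ _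
      _ ≤ (S n).card • (2 * exp (-((n : ℝ) ^ (1 - 2 * q) / 2))) := by
          refine Finset.sum_le_card_nsmul _ _ _ fun t _ => ?_
          rw [← hscale]
          exact hμ.measureReal_le_abs_integral_sub_le (hf t) (hf1 t) n (by positivity)
      _ ≤ C * (n + 1) * (2 * exp (-((n : ℝ) ^ (1 - 2 * q) / 2))) := by
          rw [nsmul_eq_mul]
          gcongr
          exact hS n
      _ = 2 * C * ((n + 1) * exp (-((n : ℝ) ^ (1 - 2 * q) / 2))) := by ring
  have hsummable : ∑' n, μ (⋃ t ∈ S n, bad n t) ≠ ∞ := by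
    refine ne_top_of_le_ne_top ((summable_add_one_mul_exp_neg_rpow
      (p := 1 - 2 * q) (by linarith)).mul_left (2 * C)).tsum_ofReal_ne_top
      (ENNReal.tsum_le_tsum fun n => ?_)
    rw [← ofReal_measureReal (measure_ne_top _ _)]
    exact ENNReal.ofReal_le_ofReal (hmeasure n)
  filter_upwards [ae_eventually_notMem hsummable] with h hh
  filter_upwards [hh] with n hn t ht
  exact not_le.1 fun hle => hn (Set.mem_biUnion ht hle)

lemma ae_eventually_forall_mem_Icc (hμ : IsProductMeasure ν μ) (hf : ∀ t, Measurable (f t))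
    (hf1 : ∀ t y, |f t y| ≤ 1) {K : ℝ} (hK : 0 ≤ K)
    (hlip : ∀ s t y, |f s y - f t y| ≤ K * |s - t|) (a b : ℝ) {q : ℝ} (hq : q < 1 / 2) :
    ∀ᵐ h ∂μ, ∀ᶠ n : ℕ in atTop, ∀ t ∈ Set.Icc a b,
      |∫ y, f t y ∂empiricalMeasure h n - ∫ y, f t y ∂ν| ≤
        (n : ℝ) ^ (-q) + 2 * K * (1 / ((n : ℝ) + 1)) := by
  obtain ⟨C, hC⟩ := exists_finset_net a b
  choose S hcard hnet using hC
  have hint (t : ℝ) : Integrable (f t) ν :=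
    .of_bound (hf t).aestronglyMeasurable 1 (.of_forall (hf1 t))
  filter_upwards [hμ.ae_eventually_forall_mem_finset hf hf1 hcard hq] with h hh
  filter_upwards [hh, eventually_ne_atTop 0] with n hn hn0 t ht
  have : NeZero n := ⟨hn0⟩
  obtain ⟨s, hs, hts⟩ := hnet n t ht
  have hstep : K * |t - s| ≤ K * (1 / ((n : ℝ) + 1)) := mul_le_mul_of_nonneg_left hts hK
  have hgrid := abs_lt.1 (hn s hs)
  have hempirical := abs_le.1 ((abs_integral_sub_integral_le
    (fun t => integrable_empiricalMeasure h n (f t)) hlip t s).trans hstep)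
  have hlimit := abs_le.1 ((abs_integral_sub_integral_le hint hlip t s).trans hstep)
  exact abs_le.2 ⟨by linarith, by linarith⟩

theorem ae_forall_eventually_abs_integral_sub_le (hμ : IsProductMeasure ν μ)
    (hf : ∀ t, Measurable (f t)) (hf1 : ∀ t y, |f t y| ≤ 1) {K : ℝ} (hK : 0 ≤ K)
    (hlip : ∀ s t y, |f s y - f t y| ≤ K * |s - t|) (a b : ℝ) :
    ∀ᵐ h ∂μ, ∀ q : ℝ, q < 1 / 2 → ∀ ε > (0 : ℝ), ∀ᶠ n : ℕ in atTop, ∀ t ∈ Set.Icc a b,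
      |∫ y, f t y ∂empiricalMeasure h n - ∫ y, f t y ∂ν| ≤ ε * (n : ℝ) ^ (-q) := by
  have hrational : ∀ᵐ h ∂μ, ∀ r : ℚ, (r : ℝ) < 1 / 2 → ∀ᶠ n : ℕ in atTop, ∀ t ∈ Set.Icc a b,
      |∫ y, f t y ∂empiricalMeasure h n - ∫ y, f t y ∂ν| ≤
        (n : ℝ) ^ (-(r : ℝ)) + 2 * K * (1 / ((n : ℝ) + 1)) :=
    ae_all_iff.2 fun r => ae_all_iff.2 fun hr =>
      hμ.ae_eventually_forall_mem_Icc hf hf1 hK hlip a b hr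
  filter_upwards [hrational] with h hh q hq ε hε
  obtain ⟨r, hqr, hr⟩ := exists_rat_btwn hq
  have hnet : (fun n : ℕ => 2 * K * (1 / ((n : ℝ) + 1))) =o[atTop] fun n : ℕ => (n : ℝ) ^ (-q) :=
    (isBigO_one_div_add_one.trans_isLittleO
      (isLittleO_natCast_rpow_rpow (by linarith))).const_mul_left _
  filter_upwards [hh r hr, 
    ((isLittleO_natCast_rpow_rpow (neg_lt_neg hqr)).add hnet).def hε] with n hn hsmall t ht
  refine (hn t ht).trans ?_
  rw [norm_of_nonneg (by positivity), norm_of_nonneg (by positivity)] at hsmall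
  exact hsmall

end IsProductMeasure

end Concentration

section LargeDeviations

/-- Laplace-type bounds `w n C ≈ exp (-v n * inf_C f)` at speed `v`, from above for all sets and
from below at interior points. -/
structure HasExponentialBounds (w : ℕ → Set ℝ → ℝ) (v : ℕ → ℝ) (f : ℝ → ℝ) : Prop where
  eventually_le : ∀ C J, (∀ s ∈ C, J ≤ f s) → ∀ ε > 0,
    ∀ᶠ n in atTop, w n C ≤ exp (-(v n * (J - ε)))
  eventually_exp_le : ∀ C, ∀ s ∈ interior C, ∀ ε > 0,
    ∀ᶠ n in atTop, exp (-(v n * (f s + ε))) ≤ w n C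

lemma elog_ofReal {y : ℝ} (hy : 0 < y) : elog (ENNReal.ofReal y) = (log y : ℝ) := by
  rw [elog, if_neg (ENNReal.ofReal_pos.2 hy).ne', if_neg ENNReal.ofReal_ne_top,
    ENNReal.toReal_ofReal hy.le]

lemma le_inv_mul_elog {v y c : ℝ} (hv : 0 < v) (h : exp (v * c) ≤ y) :
    (c : EReal) ≤ ((v⁻¹ : ℝ) : EReal) * elog (ENNReal.ofReal y) := by
  have hy : 0 < y := (exp_pos _).trans_le h
  rw [elog_ofReal hy, ← EReal.coe_mul, EReal.coe_le_coe_iff, le_inv_mul_iff₀ hv]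
  exact (le_log_iff_exp_le hy).2 h

lemma inv_mul_elog_le {v y c : ℝ} (hv : 0 < v) (h : y ≤ exp (v * c)) :
    ((v⁻¹ : ℝ) : EReal) * elog (ENNReal.ofReal y) ≤ c := by
  rcases le_or_gt y 0 with hy | hy
  · rw [ENNReal.ofReal_of_nonpos hy, elog, if_pos rfl, EReal.coe_mul_bot_of_pos (inv_pos.2 hv)]
    exact bot_le
  · rw [elog_ofReal hy, ← EReal.coe_mul, EReal.coe_le_coe_iff, inv_mul_le_iff₀ hv]
    exact (log_le_iff_le_exp hy).2 h

namespace HasExponentialBounds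

variable {w : ℕ → Set ℝ → ℝ} {v : ℕ → ℝ} {f : ℝ → ℝ}

lemma div_univ (hw : HasExponentialBounds w v f) (hf : 0 ≤ f) {x : ℝ} (hx : f x = 0) :
    HasExponentialBounds (fun n C => w n C / w n .univ) v f := by
  have huniv (ε : ℝ) (hε : 0 < ε) : ∀ᶠ n in atTop, exp (-(v n * ε)) ≤ w n .univ := by
    simpa [hx] using hw.eventually_exp_le .univ x (by simp) ε hε
  constructor
  · intro C J hJ ε hε
    filter_upwards [hw.eventually_le C J hJ (ε / 2) (half_pos hε), huniv (ε / 2) (half_pos hε)]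
      with n hC hpos
    rw [div_le_iff₀ ((exp_pos _).trans_le hpos)]
    calc w n C ≤ exp (-(v n * (J - ε / 2))) := hC
      _ = exp (-(v n * (J - ε))) * exp (-(v n * (ε / 2))) := by rw [← exp_add]; ring_nf
      _ ≤ exp (-(v n * (J - ε))) * w n .univ := by gcongr
  · intro C s hs ε hε
    filter_upwards [hw.eventually_exp_le C s hs (ε / 2) (half_pos hε), huniv 1 one_pos,
      hw.eventually_le .univ 0 (fun s _ => hf s) (ε / 2) (half_pos hε)] with n hC hpos hle
    rw [le_div_iff₀ ((exp_pos _).trans_le hpos)]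
    calc exp (-(v n * (f s + ε))) * w n .univ
        ≤ exp (-(v n * (f s + ε))) * exp (-(v n * (0 - ε / 2))) := by gcongr
      _ = exp (-(v n * (f s + ε / 2))) := by rw [← exp_add]; ring_nf
      _ ≤ w n C := hC

variable {P : ℕ → Measure ℝ} {C : Set ℝ}

lemma le_liminf (hw : HasExponentialBounds w v f) (hv : ∀ᶠ n in atTop, 0 < v n)
    (hP : ∀ᶠ n in atTop, P n C = ENNReal.ofReal (w n C)) :
    -(⨅ x ∈ interior C, (f x : EReal)) ≤
      liminf (fun n => (((v n)⁻¹ : ℝ) : EReal) * elog (P n C)) atTop := by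
  refine EReal.ge_of_forall_gt_iff_ge.1 fun z hz => ?_
  simp only [EReal.lt_neg_comm, iInf_lt_iff] at hz
  obtain ⟨x, hx, hxz⟩ := hz
  have hxz' : f x < -z := by exact_mod_cast hxz
  refine le_liminf_of_le (by isBoundedDefault) ?_
  filter_upwards [hv, hP, hw.eventually_exp_le C x hx (-z - f x) (sub_pos.2 hxz')]
    with n hvn hPn hlow
  rw [hPn]
  exact le_inv_mul_elog hvn (by simpa using hlow)

lemma limsup_le (hw : HasExponentialBounds w v f) (hv : ∀ᶠ n in atTop, 0 < v n)
    (hP : ∀ᶠ n in atTop, P n C = ENNReal.ofReal (w n C)) :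
    limsup (fun n => (((v n)⁻¹ : ℝ) : EReal) * elog (P n C)) atTop ≤
      -(⨅ x ∈ closure C, (f x : EReal)) := by
  refine EReal.le_of_forall_lt_iff_le.1 fun z hz => ?_
  obtain ⟨u, hu, huz⟩ := EReal.lt_iff_exists_real_btwn.1 hz
  have huz' : u < z := EReal.coe_lt_coe_iff.1 huz
  have hJ (s : ℝ) (hs : s ∈ C) : -u ≤ f s := by
    have := (EReal.neg_lt_comm.1 hu).trans_le (iInf₂_le s (subset_closure hs))
    exact_mod_cast this.le
  refine limsup_le_of_le (by isBoundedDefault) ?_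
  filter_upwards [hv, hP, hw.eventually_le C (-u) hJ (z - u) (sub_pos.2 huz')] with n hvn hPn hup
  rw [hPn]
  exact inv_mul_elog_le hvn (hup.trans_eq (by ring_nf))

theorem hasLDP (hw : HasExponentialBounds w v f) (hv : ∀ᶠ n in atTop, 0 < v n) (hf : 0 ≤ f)
    (hf_cont : Continuous f) (hf_compact : ∀ c, IsCompact {x | f x ≤ c})
    (hP : ∀ᶠ n in atTop, ∀ C, MeasurableSet C → P n C = ENNReal.ofReal (w n C)) :
    HasLDP P v fun x => ENNReal.ofReal (f x) := by
  have hcoe (x : ℝ) : ((ENNReal.ofReal (f x) : ℝ≥0∞) : EReal) = (f x : ℝ) := by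
    rw [EReal.coe_ennreal_ofReal, max_eq_left (show 0 ≤ f x from hf x)]
  refine ⟨(ENNReal.continuous_ofReal.comp hf_cont).lowerSemicontinuous, fun c => ?_,
    fun C hC => ?_⟩
  · simpa only [ENNReal.ofReal_le_ofReal_iff', ← le_max_iff] using hf_compact (max c 0)
  · simp only [hcoe]
    have hPC := hP.mono fun n h => h C hC
    exact ⟨hw.le_liminf hv hPC, hw.limsup_le hv hPC⟩

end HasExponentialBounds

lemma isCompact_setOf_mul_pow_le {ρ : ℝ} (hρ : 0 < ρ) {n : ℕ} (hn : Even n) (hn0 : n ≠ 0)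
    (c : ℝ) : IsCompact {x : ℝ | ρ * x ^ n ≤ c} := by
  have hpow : Tendsto (fun x : ℝ => x ^ n) (cocompact ℝ) atTop :=
    ((tendsto_pow_atTop hn0).comp (tendsto_norm_cocompact_atTop (E := ℝ))).congr hn.pow_abs
  obtain ⟨K, hK, hKc⟩ := mem_cocompact.1 ((hpow.const_mul_atTop hρ).eventually_gt_atTop c)
  refine hK.of_isClosed_subset (isClosed_le (by fun_prop) continuous_const) fun x hx => ?_
  by_contra hxK
  exact not_lt_of_ge (show ρ * x ^ n ≤ c from hx) (hKc hxK)

end LargeDeviations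

section ModerateScale

/-- A sequence of scales `b n → 0` for deviations of `mag σ / n` from a minimum of type `k`: the
speed `n * b n ^ (2 * k)` has to beat the polynomial number `n + 1` of values of `mag`. -/
structure IsModerateScale (k : ℕ) (b : ℕ → ℝ) : Prop where
  eventually_pos : ∀ᶠ n in atTop, 0 < b n
  tendsto_zero : Tendsto b atTop (𝓝 0)
  isLittleO_log : (fun n : ℕ => log n) =o[atTop] fun n => n * b n ^ (2 * k)

namespace IsModerateScale

variable {k : ℕ} {b : ℕ → ℝ}

lemma eventually_speed_pos (hb : IsModerateScale k b) :
    ∀ᶠ n : ℕ in atTop, 0 < n * b n ^ (2 * k) := by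
  filter_upwards [hb.eventually_pos, eventually_gt_atTop 0] with n hbn hn
  have : (0 : ℝ) < n := Nat.cast_pos.2 hn
  positivity

lemma eventually_le_exp (hb : IsModerateScale k b) {δ : ℝ} (hδ : 0 < δ) :
    ∀ᶠ n : ℕ in atTop, 2 * ((n : ℝ) + 1) ≤ exp (n * b n ^ (2 * k) * δ) := by
  filter_upwards [hb.isLittleO_log.def (half_pos hδ), hb.eventually_speed_pos,
    eventually_ge_atTop 3] with n hlog hspeed hn
  have hn' : (3 : ℝ) ≤ n := by exact_mod_cast hn
  rw [norm_of_nonneg (log_nonneg (by linarith)), norm_of_nonneg hspeed.le] at hlog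
  calc 2 * ((n : ℝ) + 1) ≤ n ^ 2 := by nlinarith
    _ = exp (2 * log n) := by
      rw [← Nat.cast_two (R := ℝ), exp_nat_mul, exp_log (by linarith)]
    _ ≤ exp (n * b n ^ (2 * k) * δ) := exp_le_exp.2 (by linarith)

lemma tendsto_mul_const (hb : IsModerateScale k b) (y : ℝ) :
    Tendsto (fun n => b n * y) atTop (𝓝 0) := by
  simpa using hb.tendsto_zero.mul_const y

lemma eventually_abs_mul_le (hb : IsModerateScale k b) (y : ℝ) {δ : ℝ} (hδ : 0 < δ) :
    ∀ᶠ n in atTop, |b n * y| ≤ δ :=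
  (hb.tendsto_mul_const y).abs.eventually_le_const (abs_zero.trans_lt hδ)

lemma eventually_exp_neg_le (hb : IsModerateScale k b) (hk : 1 ≤ k) {d : ℝ} (hd : 0 < d) :
    ∀ᶠ n : ℕ in atTop, exp (-(n * (b n * d) ^ 2 / 8)) ≤ 1 / 4 := by
  filter_upwards [hb.eventually_le_exp (δ := d ^ 2 / 8) (by positivity), hb.eventually_pos,
    hb.tendsto_zero.eventually_le_const one_pos, eventually_ge_atTop 1] with n hexp hpos hle hn
  have hn' : (1 : ℝ) ≤ n := by exact_mod_cast hn
  have hsq : b n ^ (2 * k) ≤ b n ^ 2 := pow_le_pow_of_le_one hpos.le hle (by omega)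
  rw [exp_neg, one_div]
  gcongr
  calc (4 : ℝ) ≤ 2 * (n + 1) := by linarith
    _ ≤ exp (n * b n ^ (2 * k) * (d ^ 2 / 8)) := hexp
    _ ≤ exp (n * b n ^ 2 * (d ^ 2 / 8)) := by gcongr
    _ = exp (n * (b n * d) ^ 2 / 8) := by ring_nf

end IsModerateScale

lemma natCast_rpow_sub_one_pow (n : ℕ) (α : ℝ) (j : ℕ) :
    ((n : ℝ) ^ (α - 1)) ^ j = (n : ℝ) ^ (-((1 - α) * j)) := by
  rw [← rpow_mul_natCast n.cast_nonneg]
  ring_nf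

lemma natCast_mul_rpow_sub_one_pow (n : ℕ) {α : ℝ} {j : ℕ} (hα : 1 - j * (1 - α) ≠ 0) :
    n * ((n : ℝ) ^ (α - 1)) ^ j = (n : ℝ) ^ (1 - j * (1 - α)) := by
  rw [natCast_rpow_sub_one_pow, sub_eq_add_neg 1 (_ * _),
    rpow_one_add' n.cast_nonneg (by rwa [← sub_eq_add_neg]), mul_comm (j : ℝ)]

lemma isModerateScale_rpow {k : ℕ} {α : ℝ} (hα : α < 1) (hγ : 0 < 1 - 2 * (k : ℝ) * (1 - α)) :
    IsModerateScale k fun n => (n : ℝ) ^ (α - 1) where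
  eventually_pos := by
    filter_upwards [eventually_gt_atTop 0] with n hn
    have : (0 : ℝ) < n := Nat.cast_pos.2 hn
    positivity
  tendsto_zero := by
    simpa [Function.comp_def] using (tendsto_rpow_neg_atTop (sub_pos.2 hα)).comp
      (tendsto_natCast_atTop_atTop (R := ℝ))
  isLittleO_log := by
    refine ((isLittleO_log_rpow_atTop hγ).comp_tendsto tendsto_natCast_atTop_atTop).congr_right
      fun n => ?_
    rw [natCast_mul_rpow_sub_one_pow n (by push_cast; exact hγ.ne')]
    simp

end ModerateScale

section Asymptotics

/-- The realizations `h` of the field whose empirical mean magnetization is close to its limit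
`meanTanh β ν` near `m`, at the precision `b ^ (2 * k - 1)` to which the derivative of `G`
has to be known at distance `b` from a minimum of type `k`. -/
def IsTypicalField (β : ℝ) (ν : Measure ℝ) (m : ℝ) (k : ℕ) (b : ℕ → ℝ) (h : ℕ → ℝ) : Prop :=
  ∀ ε > 0, ∀ᶠ n in atTop, ∀ t ∈ Set.Icc (m - 1) (m + 1),
    |meanTanh β (empiricalMeasure h n) t - meanTanh β ν t| ≤ ε * b n ^ (2 * k - 1)

variable {β m l : ℝ} {ν : Measure ℝ} {k : ℕ} {b : ℕ → ℝ} {h : ℕ → ℝ}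

lemma abs_le_one_add_pow_two_mul (hk : 1 ≤ k) (y : ℝ) : |y| ≤ 1 + y ^ (2 * k) := by
  rcases le_total |y| 1 with hy | hy
  · exact hy.trans (le_add_of_nonneg_right ((even_two_mul k).pow_nonneg y))
  · rw [← (even_two_mul k).pow_abs]
    exact (le_self_pow₀ hy (by omega)).trans (le_add_of_nonneg_left zero_le_one)

lemma IsTypicalField.eventually_abs_Gn_sub_sub_le [IsFiniteMeasure ν]
    (hh : IsTypicalField β ν m k b h) (hb : IsModerateScale k b) (hβ : β ≠ 0)
    (hν : Integrable (fun x : ℝ => x) ν) (hk : 1 ≤ k) {ε : ℝ} (hε : 0 < ε) :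
    ∀ᶠ n in atTop, ∀ y, |b n * y| ≤ 1 →
      |(Gn β h n (m + b n * y) - Gn β h n m) - (G β ν (m + b n * y) - G β ν m)| ≤
        ε * b n ^ (2 * k) * |y| := by
  filter_upwards [hh (ε / |β|) (by positivity), hb.eventually_pos] with n hn hbn y hy
  have hpow : b n ^ (2 * k) = b n ^ (2 * k - 1) * b n := by
    rw [← pow_succ, Nat.sub_add_cancel (by omega)]
  obtain ⟨hy₁, hy₂⟩ := abs_le.1 hy
  have hdiff := abs_G_sub_sub_G_sub_le (integrable_empiricalMeasure h n _) hν
    (convex_Icc (m - 1) (m + 1)) hn (x := m) (y := m + b n * y)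
    ⟨by linarith, by linarith⟩ ⟨by linarith, by linarith⟩
  rw [← Gn_eq_G_empiricalMeasure, add_sub_cancel_left, abs_mul (b n), abs_of_pos hbn] at hdiff
  refine hdiff.trans_eq ?_
  rw [hpow]
  field_simp

namespace IsMinOfType

lemma exists_forall_abs_G_sub_le [IsFiniteMeasure ν] (hmin : IsMinOfType β ν m k l)
    (hν : Integrable (fun x : ℝ => x) ν) {ε : ℝ} (hε : 0 < ε) :
    ∃ δ > 0, ∀ v, |v| ≤ δ →
      |G β ν (m + v) - G β ν m - l / (2 * k).factorial * v ^ (2 * k)| ≤ ε * v ^ (2 * k) := by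
  obtain ⟨δ, hδ, hball⟩ := Metric.nhds_basis_closedBall.eventually_iff.1
    ((hmin.isLittleO_G hν).def hε)
  refine ⟨δ, hδ, fun v hv => ?_⟩
  have := hball (x := m + v) (by simpa [Real.dist_eq] using hv)
  rwa [add_sub_cancel_left, norm_of_nonneg ((even_two_mul k).pow_nonneg v)] at this

theorem exists_forall_eventually_abs_Gn_sub_le [IsFiniteMeasure ν] (hmin : IsMinOfType β ν m k l)
    (hβ : β ≠ 0) (hν : Integrable (fun x : ℝ => x) ν) {ε : ℝ} (hε : 0 < ε) :
    ∃ δ > 0, ∀ b h, IsModerateScale k b → IsTypicalField β ν m k b h →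
      ∀ᶠ n in atTop, ∀ y, |b n * y| ≤ δ →
        |Gn β h n (m + b n * y) - Gn β h n m
          - b n ^ (2 * k) * (l / (2 * k).factorial * y ^ (2 * k))| ≤
          b n ^ (2 * k) * (ε * (1 + y ^ (2 * k))) := by
  obtain ⟨δ, hδ, hG⟩ := hmin.exists_forall_abs_G_sub_le hν (half_pos hε)
  refine ⟨min δ 1, lt_min hδ one_pos, fun b h hb hh => ?_⟩
  filter_upwards [hh.eventually_abs_Gn_sub_sub_le hb hβ hν hmin.1 (half_pos hε),
    hb.eventually_pos] with n hn hbn y hy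
  have : 0 < b n ^ (2 * k) := by positivity
  have hlimit := hG (b n * y) (hy.trans (min_le_left _ _))
  have hrandom : ε / 2 * b n ^ (2 * k) * |y| ≤ ε / 2 * b n ^ (2 * k) * (1 + y ^ (2 * k)) := by
    gcongr
    exact abs_le_one_add_pow_two_mul hmin.1 y
  have hsum := (abs_add_le _ _).trans
    (add_le_add ((hn y (hy.trans (min_le_right _ _))).trans hrandom) hlimit)
  rw [mul_pow] at hsum
  calc _ = _ := by congr 1; ring
    _ ≤ _ := hsum
    _ ≤ b n ^ (2 * k) * (ε * (1 + y ^ (2 * k))) := by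
      have : 0 ≤ ε * b n ^ (2 * k) := by positivity
      linarith

end IsMinOfType

lemma one_sub_tiltSlope_sq_mul_sq (β l : ℝ) (k : ℕ) (x : ℝ) :
    (1 - tiltSlope β l k) ^ 2 * x ^ 2 = (1 - tiltSlope β l k) ^ 2 * x ^ (2 * k) := by
  rcases eq_one_or_tiltSlope_eq_one β l k with rfl | hc
  · rw [mul_one]
  · simp [hc]

/-- The exponent, relative to `-Gn β h n m`, which tilting by the field `m + c v` with
`c = tiltSlope β l k` yields for the Gibbs weight per spin of `{mag σ / n = m + v}`. -/
def tiltedExponent (β m l : ℝ) (k : ℕ) (h : ℕ → ℝ) (n : ℕ) (v : ℝ) : ℝ :=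
  β / 2 * (v - tiltSlope β l k * v) ^ 2 -
    (Gn β h n (m + tiltSlope β l k * v) - Gn β h n m)

namespace IsMinOfType

lemma exists_forall_eventually_abs_tiltedExponent_add_le [IsFiniteMeasure ν]
    (hmin : IsMinOfType β ν m k l) (hβ : β ≠ 0) (hν : Integrable (fun x : ℝ => x) ν) {ε : ℝ}
    (hε : 0 < ε) :
    ∃ A > 0, ∀ b h, IsModerateScale k b → IsTypicalField β ν m k b h → ∀ᶠ n in atTop, ∀ s,
      |b n * s| ≤ A →
        |tiltedExponent β m l k h n (b n * s) + b n ^ (2 * k) * (rateCoeff β l k * s ^ (2 * k))| ≤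
          b n ^ (2 * k) * (ε * (1 + s ^ (2 * k))) := by
  set c := tiltSlope β l k with hc
  have hc_even : 0 ≤ c ^ (2 * k) := (even_two_mul k).pow_nonneg c
  obtain ⟨δ, hδ, hGn⟩ := hmin.exists_forall_eventually_abs_Gn_sub_le hβ hν
    (ε := ε / (1 + c ^ (2 * k))) (by positivity)
  refine ⟨δ / (1 + |c|), by positivity, fun b h hb hh => ?_⟩
  filter_upwards [hGn b h hb hh, hb.eventually_pos] with n hn hbn s hs
  have hs_even : 0 ≤ s ^ (2 * k) := (even_two_mul k).pow_nonneg s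
  have hquad : β / 2 * (b n * s - c * (b n * s)) ^ 2 =
      b n ^ (2 * k) * (β / 2 * (1 - c) ^ 2 * s ^ (2 * k)) := by
    have := one_sub_tiltSlope_sq_mul_sq β l k (b n * s)
    rw [mul_pow _ _ (2 * k), ← hc] at this
    linear_combination β / 2 * this
  have hcs : |b n * (c * s)| ≤ δ := by
    rw [le_div_iff₀ (by positivity)] at hs
    rw [mul_left_comm, abs_mul, mul_comm]
    nlinarith [abs_nonneg (b n * s)]
  have hε' : ε / (1 + c ^ (2 * k)) * (1 + (c * s) ^ (2 * k)) ≤ ε * (1 + s ^ (2 * k)) := by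
    rw [div_mul_eq_mul_div, div_le_iff₀ (by positivity), mul_pow, mul_assoc]
    gcongr
    linarith
  rw [tiltedExponent, rateCoeff, ← hc, hquad, mul_left_comm c]
  refine (Eq.trans_le ?_ (hn (c * s) hcs)).trans (mul_le_mul_of_nonneg_left hε' (by positivity))
  rw [mul_pow c s, ← abs_neg]
  congr 1
  ring

lemma eventually_abs_tiltedExponent_add_le [IsFiniteMeasure ν] (hmin : IsMinOfType β ν m k l)
    (hβ : β ≠ 0) (hν : Integrable (fun x : ℝ => x) ν) (hb : IsModerateScale k b)
    (hh : IsTypicalField β ν m k b h) (R : ℝ) {ε : ℝ} (hε : 0 < ε) :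
    ∀ᶠ n in atTop, ∀ s, |s| ≤ R →
      |tiltedExponent β m l k h n (b n * s) + b n ^ (2 * k) * (rateCoeff β l k * s ^ (2 * k))| ≤
        b n ^ (2 * k) * ε := by
  have hR : 0 ≤ R ^ (2 * k) := (even_two_mul k).pow_nonneg R
  obtain ⟨A, hA, hexponent⟩ := hmin.exists_forall_eventually_abs_tiltedExponent_add_le hβ hν
    (ε := ε / (1 + R ^ (2 * k))) (by positivity)
  filter_upwards [hexponent b h hb hh, hb.eventually_pos, hb.eventually_abs_mul_le R hA]
    with n hn hbn hbR s hs
  have hsR : s ^ (2 * k) ≤ R ^ (2 * k) := by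
    rw [← (even_two_mul k).pow_abs s]
    exact pow_le_pow_left₀ (abs_nonneg s) hs _
  refine (hn s (le_trans ?_ hbR)).trans (mul_le_mul_of_nonneg_left ?_ (by positivity))
  · rw [abs_mul, abs_mul]
    exact mul_le_mul_of_nonneg_left (hs.trans (le_abs_self R)) (abs_nonneg _)
  · rw [div_mul_eq_mul_div, div_le_iff₀ (by positivity)]
    gcongr

-- Near `m` the exponent is at most `-ρ s ^ (2 k) / 2` up to a constant, which settles large `s`;
-- for bounded `s` the expansion is exact up to `ε`.
theorem exists_forall_eventually_tiltedExponent_le [IsProbabilityMeasure ν]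
    (hmin : IsMinOfType β ν m k l) (hβ : 0 < β) (hν : Integrable (fun x : ℝ => x) ν) :
    ∃ A > 0, ∀ b h, IsModerateScale k b → IsTypicalField β ν m k b h → ∀ J, ∀ ε > 0,
      ∀ᶠ n in atTop, ∀ s, |b n * s| ≤ A → J ≤ rateCoeff β l k * s ^ (2 * k) →
        tiltedExponent β m l k h n (b n * s) ≤ -(b n ^ (2 * k) * (J - ε)) := by
  set ρ := rateCoeff β l k
  have hρ : 0 < ρ := hmin.rateCoeff_pos hβ hν
  obtain ⟨A, hA, hcrude⟩ :=
    hmin.exists_forall_eventually_abs_tiltedExponent_add_le hβ.ne' hν (half_pos hρ)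
  refine ⟨A, hA, fun b h hb hh J ε hε => ?_⟩
  set M := 1 + 2 * J / ρ with hM
  filter_upwards [hcrude b h hb hh, hb.eventually_pos,
    hmin.eventually_abs_tiltedExponent_add_le hβ.ne' hν hb hh (1 + M) hε]
    with n hn hbn hsharp s hs hJ
  have hb2k : 0 < b n ^ (2 * k) := by positivity
  rcases le_total (s ^ (2 * k)) M with hsM | hsM
  · have hexpansion := (abs_le.1 (hsharp s
      ((abs_le_one_add_pow_two_mul hmin.1 s).trans (by gcongr)))).2
    nlinarith [mul_le_mul_of_nonneg_left hJ hb2k.le]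
  · have hexpansion := (abs_le.1 (hn s hs)).2
    have hlarge : ρ + 2 * J ≤ ρ * s ^ (2 * k) := by
      calc ρ + 2 * J = ρ * M := by rw [hM]; field_simp
        _ ≤ ρ * s ^ (2 * k) := by gcongr
    nlinarith [mul_le_mul_of_nonneg_left hlarge hb2k.le, mul_pos hb2k hε]

lemma eventually_abs_meanTanh_sub_le [IsProbabilityMeasure ν] (hmin : IsMinOfType β ν m k l)
    (hβ : 0 < β) (hν : Integrable (fun x : ℝ => x) ν) (hb : IsModerateScale k b)
    (hh : IsTypicalField β ν m k b h) (s : ℝ) {d : ℝ} (hd : 0 < d) :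
    ∀ᶠ n in atTop, |meanTanh β (empiricalMeasure h n) (m + tiltSlope β l k * (b n * s))
      - (m + b n * s)| ≤ b n * d := by
  set c := tiltSlope β l k
  have hc0 : c ≠ 0 := hmin.tiltSlope_ne_zero hβ hν
  have hfield : Tendsto (fun n => m + c * (b n * s)) atTop (𝓝 m) := by
    simpa using ((hb.tendsto_mul_const s).const_mul c).const_add m
  have hderiv := (hfield.eventually ((hasDerivAt_iff_isLittleO.1
    (hmin.hasDerivAt_meanTanh_inv_tiltSlope hβ.ne' hν)).def
      (c := d / 2 / (1 + |c * s|)) (by positivity)))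
  have hIcc := hfield.eventually (Icc_mem_nhds (sub_one_lt m) (lt_add_one m))
  filter_upwards [hderiv, hIcc, hh (d / 2) (half_pos hd), hb.eventually_pos,
    hb.tendsto_zero.eventually_le_const one_pos] with n hlin hmem htypical hbn hb1
  have hrandom : d / 2 * b n ^ (2 * k - 1) ≤ d / 2 * b n := by
    gcongr
    exact pow_le_of_le_one hbn.le hb1 (by have := hmin.1; omega)
  have hlimit : |meanTanh β ν (m + c * (b n * s)) - (m + b n * s)| ≤ d / 2 * b n := by
    rw [hmin.meanTanh_eq hβ.ne' hν, add_sub_cancel_left, smul_eq_mul, norm_eq_abs, norm_eq_abs,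
      mul_right_comm, mul_inv_cancel₀ hc0, one_mul, sub_sub] at hlin
    refine hlin.trans ?_
    rw [mul_left_comm c, abs_mul (b n), abs_of_pos hbn, div_mul_eq_mul_div,
      div_le_iff₀ (by positivity)]
    have : 0 ≤ d / 2 * b n := by positivity
    linarith
  calc _ ≤ _ := abs_sub_le _ (meanTanh β ν (m + c * (b n * s))) _
    _ ≤ d / 2 * b n + d / 2 * b n := add_le_add ((htypical _ hmem).trans hrandom) hlimit
    _ = b n * d := by ring

end IsMinOfType

lemma eventually_mul_sq_sub_le (β l : ℝ) (hβ : 0 ≤ β) (k : ℕ) (s₀ : ℝ) {ε : ℝ} (hε : 0 < ε) :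
    ∀ᶠ s in 𝓝 s₀, ∀ b : ℝ, β / 2 * (b * s₀ - tiltSlope β l k * (b * s₀)) ^ 2 - b ^ (2 * k) * ε ≤
      β / 2 * (b * s - tiltSlope β l k * (b * s₀)) ^ 2 := by
  rcases eq_one_or_tiltSlope_eq_one β l k with rfl | hc
  · set c := tiltSlope β l 1
    have hcont : ContinuousAt (fun s => β / 2 * (s - c * s₀) ^ 2) s₀ := by fun_prop
    filter_upwards [hcont.eventually_const_le (sub_lt_self _ hε)] with s hs b
    have := mul_le_mul_of_nonneg_left hs (sq_nonneg b)
    rw [mul_one]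
    linarith
  · filter_upwards with s b
    have : 0 ≤ b ^ (2 * k) := (even_two_mul k).pow_nonneg b
    rw [hc]
    have : 0 ≤ b ^ (2 * k) * ε := by positivity
    have : 0 ≤ β / 2 * (b * s - 1 * (b * s₀)) ^ 2 := by positivity
    linarith

end Asymptotics

section ModerateDeviations

lemma gibbsMeasure_apply (β : ℝ) (h : ℕ → ℝ) (n : ℕ) (s : Set (Fin n → Bool)) :
    gibbsMeasure β h n s =
      (ENNReal.ofReal (totalWeight (gibbsWeight β h n) .univ))⁻¹ *
        ENNReal.ofReal (totalWeight (gibbsWeight β h n) s) := by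
  rw [gibbsMeasure, Measure.smul_apply, smul_eq_mul, totalWeight_univ, Measure.finsetSum_apply,
    totalWeight, ENNReal.ofReal_sum_of_nonneg
      fun σ _ => Set.indicator_nonneg (fun σ _ => gibbsWeight_nonneg β h n σ) σ]
  congr 1
  refine Finset.sum_congr rfl fun σ _ => ?_
  rw [Measure.smul_apply, Measure.dirac_apply' _ s.toFinite.measurableSet, smul_eq_mul]
  by_cases hs : σ ∈ s <;> simp [hs]

lemma gibbsMeasure_cond_map_apply {β : ℝ} {h : ℕ → ℝ} {n : ℕ} {s : Set (Fin n → Bool)}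
    (hs : 0 < totalWeight (gibbsWeight β h n) s) (X : (Fin n → Bool) → ℝ) {C : Set ℝ}
    (hC : MeasurableSet C) :
    ((gibbsMeasure β h n)[|s]).map X C =
      ENNReal.ofReal (totalWeight (gibbsWeight β h n) (s ∩ X ⁻¹' C) /
        totalWeight (gibbsWeight β h n) s) := by
  have hw := gibbsWeight_nonneg β h n
  have huniv : 0 < totalWeight (gibbsWeight β h n) .univ :=
    hs.trans_le (totalWeight_mono_set hw s.subset_univ)
  have := totalWeight_nonneg hw (s ∩ X ⁻¹' C)
  rw [Measure.map_apply (measurable_of_finite X) hC, cond_apply s.toFinite.measurableSet,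
    gibbsMeasure_apply, gibbsMeasure_apply, ← ENNReal.ofReal_inv_of_pos huniv,
    ← ENNReal.ofReal_mul (by positivity), ← ENNReal.ofReal_mul (by positivity),
    ← ENNReal.ofReal_inv_of_pos (by positivity), ← ENNReal.ofReal_mul (by positivity)]
  congr 1
  field_simp

/-- The configurations whose magnetization per spin lies within distance `a` of `m`. -/
def magWindow (m a : ℝ) (n : ℕ) : Set (Fin n → Bool) := {σ | mag σ / n ∈ Set.Icc (m - a) (m + a)}

/-- The deviation of the magnetization per spin from `m`, in units of `b`. -/
def scaledDeviation (m b : ℝ) {n : ℕ} (σ : Fin n → Bool) : ℝ := (mag σ / n - m) / b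

/-- The Gibbs weight of those `σ` in the window of radius `a` around `m` whose deviation from `m`
on the scale `b n` lies in `C`, divided by `2 ^ n * exp (-(n * Gn β h n m))`, which is its order of
magnitude up to factors `exp (O(n * b n ^ (2 * k)))`. -/
def windowWeight (β m a : ℝ) (b h : ℕ → ℝ) (n : ℕ) (C : Set ℝ) : ℝ :=
  totalWeight (gibbsWeight β h n) (magWindow m a n ∩ scaledDeviation m (b n) ⁻¹' C) /
    (2 ^ n * exp (-(n * Gn β h n m)))

lemma windowWeight_le_iff {β m a : ℝ} {b h : ℕ → ℝ} {n : ℕ} {C : Set ℝ} {x : ℝ} :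
    windowWeight β m a b h n C ≤ exp x ↔
      totalWeight (gibbsWeight β h n) (magWindow m a n ∩ scaledDeviation m (b n) ⁻¹' C) ≤
        2 ^ n * exp (x - n * Gn β h n m) := by
  rw [windowWeight, div_le_iff₀ (by positivity), mul_left_comm, ← exp_add, ← sub_eq_add_neg]

lemma le_windowWeight_iff {β m a : ℝ} {b h : ℕ → ℝ} {n : ℕ} {C : Set ℝ} {x : ℝ} :
    exp x ≤ windowWeight β m a b h n C ↔
      2 ^ n * exp (x - n * Gn β h n m) ≤
        totalWeight (gibbsWeight β h n) (magWindow m a n ∩ scaledDeviation m (b n) ⁻¹' C) := by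
  rw [windowWeight, le_div_iff₀ (by positivity), mul_left_comm, ← exp_add, ← sub_eq_add_neg]

variable {β m l a : ℝ} {ν : Measure ℝ} {k : ℕ} {b h : ℕ → ℝ}

lemma mag_div_eq {n : ℕ} {b : ℝ} (hb : b ≠ 0) (m : ℝ) (σ : Fin n → Bool) :
    mag σ / n = m + b * scaledDeviation m b σ := by
  rw [scaledDeviation, mul_div_cancel₀ _ hb, add_sub_cancel]

lemma mem_magWindow_iff {n : ℕ} {b : ℝ} (hb : b ≠ 0) {σ : Fin n → Bool} :
    σ ∈ magWindow m a n ↔ |b * scaledDeviation m b σ| ≤ a := by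
  rw [magWindow, Set.mem_ofPred_eq, mag_div_eq hb m, Set.mem_Icc, abs_le]
  constructor <;> rintro ⟨_, _⟩ <;> constructor <;> linarith

namespace IsMinOfType

theorem exists_forall_eventually_windowWeight_le [IsProbabilityMeasure ν]
    (hmin : IsMinOfType β ν m k l) (hβ : 0 < β) (hν : Integrable (fun x : ℝ => x) ν) :
    ∃ A > 0, ∀ b h, IsModerateScale k b → IsTypicalField β ν m k b h → ∀ a ≤ A, ∀ C J,
      (∀ s ∈ C, J ≤ rateCoeff β l k * s ^ (2 * k)) → ∀ ε > 0, ∀ᶠ n : ℕ in atTop,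
        windowWeight β m a b h n C ≤ exp (-(n * b n ^ (2 * k) * (J - ε))) := by
  obtain ⟨A, hA, hexponent⟩ := hmin.exists_forall_eventually_tiltedExponent_le hβ hν
  refine ⟨A, hA, fun b h hb hh a haA C J hJ ε hε => ?_⟩
  filter_upwards [hexponent b h hb hh J (ε / 2) (half_pos hε), hb.eventually_pos,
    hb.eventually_le_exp (half_pos hε), eventually_ne_atTop 0] with n hn hbn hcard hn0
  have : NeZero n := ⟨hn0⟩
  rw [windowWeight_le_iff]
  set B := -Gn β h n m - b n ^ (2 * k) * (J - ε / 2) with hB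
  have htilt : ∀ σ ∈ magWindow m a n ∩ scaledDeviation m (b n) ⁻¹' C, ∃ t,
      β / 2 * (mag σ / n - t) ^ 2 - Gn β h n t ≤ B := by
    rintro σ ⟨hσa, hσC⟩
    have := hn _ (((mem_magWindow_iff hbn.ne').1 hσa).trans haA) (hJ _ hσC)
    refine ⟨m + tiltSlope β l k * (b n * scaledDeviation m (b n) σ), ?_⟩
    rw [mag_div_eq hbn.ne' m σ, add_sub_add_left_eq_sub]
    rw [tiltedExponent] at this
    linarith
  calc _ ≤ ((n : ℝ) + 1) * (2 ^ n * exp (n * B)) := totalWeight_gibbsWeight_le htilt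
    _ ≤ exp (n * b n ^ (2 * k) * (ε / 2)) * (2 ^ n * exp (n * B)) := by
      gcongr
      linarith [n.cast_nonneg (α := ℝ)]
    _ = _ := by
      rw [mul_left_comm, ← exp_add]
      congr 2
      ring

lemma exists_forall_eventually_exists_tilt [IsProbabilityMeasure ν] (hmin : IsMinOfType β ν m k l)
    (hβ : 0 < β) (hν : Integrable (fun x : ℝ => x) ν) (hb : IsModerateScale k b)
    (hh : IsTypicalField β ν m k b h) (s₀ : ℝ) {ε : ℝ} (hε : 0 < ε) :
    ∃ d₀ > 0, ∀ d, 0 < d → d ≤ d₀ → ∀ᶠ n in atTop, ∃ t,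
      |meanTanh β (empiricalMeasure h n) t - (m + b n * s₀)| ≤ b n * d / 2 ∧
        ∀ x, |x - (m + b n * s₀)| < b n * d →
          -Gn β h n m - b n ^ (2 * k) * (rateCoeff β l k * s₀ ^ (2 * k) + ε) ≤
            β / 2 * (x - t) ^ 2 - Gn β h n t := by
  obtain ⟨d₀, hd₀, hquad⟩ := Metric.eventually_nhds_iff.1
    (eventually_mul_sq_sub_le β l hβ.le k s₀ (half_pos hε))
  refine ⟨d₀, hd₀, fun d hd hdd₀ => ?_⟩
  filter_upwards [hb.eventually_pos, hmin.eventually_abs_meanTanh_sub_le hβ hν hb hh s₀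
      (half_pos hd), hmin.eventually_abs_tiltedExponent_add_le hβ.ne' hν hb hh |s₀| (half_pos hε)]
    with n hbn hmean hexponent
  refine ⟨m + tiltSlope β l k * (b n * s₀), by rwa [mul_div_assoc], fun x hx => ?_⟩
  obtain ⟨s, rfl⟩ : ∃ s, x = m + b n * s := ⟨(x - m) / b n, by field_simp; ring⟩
  rw [add_sub_add_left_eq_sub, ← mul_sub, abs_mul, abs_of_pos hbn, mul_lt_mul_iff_right₀ hbn] at hx
  have hinteraction := hquad (hx.trans_le hdd₀) (b n)
  have hfield := (abs_le.1 (hexponent s₀ le_rfl)).1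
  rw [tiltedExponent] at hfield
  rw [add_sub_add_left_eq_sub]
  linarith

theorem eventually_exp_le_windowWeight [IsProbabilityMeasure ν] (hmin : IsMinOfType β ν m k l)
    (hβ : 0 < β) (hν : Integrable (fun x : ℝ => x) ν) (hb : IsModerateScale k b)
    (hh : IsTypicalField β ν m k b h) (ha : 0 < a) {C : Set ℝ} {s₀ : ℝ} (hs₀ : C ∈ 𝓝 s₀)
    {ε : ℝ} (hε : 0 < ε) :
    ∀ᶠ n : ℕ in atTop, exp (-(n * b n ^ (2 * k) * (rateCoeff β l k * s₀ ^ (2 * k) + ε))) ≤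
      windowWeight β m a b h n C := by
  obtain ⟨d₀, hd₀, htilt⟩ := hmin.exists_forall_eventually_exists_tilt hβ hν hb hh s₀ (half_pos hε)
  obtain ⟨r, hr, hball⟩ := Metric.mem_nhds_iff.1 hs₀
  set d := min d₀ r
  have hd : 0 < d := lt_min hd₀ hr
  filter_upwards [htilt d hd (min_le_left _ _), hb.eventually_pos,
    hb.eventually_exp_neg_le hmin.1 hd, hb.eventually_le_exp (half_pos hε),
    hb.eventually_abs_mul_le (|s₀| + d) ha, eventually_ne_atTop 0]
    with n ⟨t, hmean, hB⟩ hbn hnd hcard hwindow hn0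
  have : NeZero n := ⟨hn0⟩
  set B := -Gn β h n m - b n ^ (2 * k) * (rateCoeff β l k * s₀ ^ (2 * k) + ε / 2)
  have hsubset : {σ : Fin n → Bool | |mag σ / n - (m + b n * s₀)| < b n * d} ⊆
      magWindow m a n ∩ scaledDeviation m (b n) ⁻¹' C := by
    intro σ (hσ : |mag σ / n - (m + b n * s₀)| < b n * d)
    rw [mag_div_eq hbn.ne' m σ, add_sub_add_left_eq_sub, ← mul_sub, abs_mul, abs_of_pos hbn,
      mul_lt_mul_iff_right₀ hbn] at hσ
    refine ⟨(mem_magWindow_iff hbn.ne').2 (le_trans ?_ hwindow), hball (hσ.trans_le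
      (min_le_right _ _))⟩
    rw [abs_mul, abs_mul, abs_of_nonneg (a := |s₀| + d) (by positivity)]
    gcongr
    linarith [abs_sub_abs_le_abs_sub (scaledDeviation m (b n) σ) s₀]
  rw [le_windowWeight_iff]
  calc _ = 2 ^ n * exp (n * B) / exp (n * b n ^ (2 * k) * (ε / 2)) := by
        rw [mul_div_assoc, ← exp_sub]
        congr 2
        ring
    _ ≤ 2 ^ n * exp (n * B) / 2 := by
        gcongr
        linarith [n.cast_nonneg (α := ℝ)]
    _ ≤ _ := le_totalWeight_gibbsWeight hβ.ne' (by positivity) hmean hnd hB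
    _ ≤ _ := totalWeight_mono_set (gibbsWeight_nonneg β h n) hsubset

theorem exists_forall_hasLDP [IsProbabilityMeasure ν] (hmin : IsMinOfType β ν m k l)
    (hβ : 0 < β) (hν : Integrable (fun x : ℝ => x) ν) :
    ∃ A > 0, ∀ b h, IsModerateScale k b → IsTypicalField β ν m k b h → ∀ a, 0 < a → a ≤ A →
      HasLDP (fun n => ((gibbsMeasure β h n)[|magWindow m a n]).map (scaledDeviation m (b n)))
        (fun n => n * b n ^ (2 * k)) (mdpRate β l k) := by
  obtain ⟨A, hA, hupper⟩ := hmin.exists_forall_eventually_windowWeight_le hβ hν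
  refine ⟨A, hA, fun b h hb hh a ha haA => ?_⟩
  have hρ := hmin.rateCoeff_pos hβ hν
  have hk0 : 2 * k ≠ 0 := by have := hmin.1; omega
  have hrate : 0 ≤ fun x : ℝ => rateCoeff β l k * x ^ (2 * k) :=
    fun x => mul_nonneg hρ.le ((even_two_mul k).pow_nonneg x)
  have hbounds : HasExponentialBounds (windowWeight β m a b h) (fun n => n * b n ^ (2 * k))
      fun x => rateCoeff β l k * x ^ (2 * k) :=
    { eventually_le := hupper b h hb hh a haA
      eventually_exp_le := fun C s hs ε hε =>
        hmin.eventually_exp_le_windowWeight hβ hν hb hh ha (mem_interior_iff_mem_nhds.1 hs) hε }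
  rw [hmin.mdpRate_eq hβ hν]
  refine (hbounds.div_univ hrate (x := 0) (by simp [hk0])).hasLDP hb.eventually_speed_pos hrate
    (by fun_prop) (isCompact_setOf_mul_pow_le hρ (even_two_mul k) hk0) ?_
  filter_upwards [hmin.eventually_exp_le_windowWeight hβ hν hb hh ha (s₀ := 0) univ_mem one_pos]
    with n hn C hC
  have hpos : 0 < totalWeight (gibbsWeight β h n) (magWindow m a n) := by
    refine lt_of_lt_of_le (by positivity) ((le_windowWeight_iff.1 hn).trans_eq ?_)
    rw [Set.preimage_univ, Set.inter_univ]
  rw [gibbsMeasure_cond_map_apply hpos _ hC, windowWeight, windowWeight, Set.preimage_univ,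
    Set.inter_univ, div_div_div_cancel_right₀ (by positivity)]

end IsMinOfType

lemma IsProductMeasure.ae_forall_isTypicalField [IsProbabilityMeasure ν] {μ : Measure (ℕ → ℝ)}
    [IsProbabilityMeasure μ] (hμ : IsProductMeasure ν μ) (β m : ℝ) (k : ℕ) :
    ∀ᵐ h ∂μ, ∀ α : ℝ, (1 - α) * (2 * k - 1 : ℕ) < 1 / 2 →
      IsTypicalField β ν m k (fun n => (n : ℝ) ^ (α - 1)) h := by
  have hlip (s t y : ℝ) : |tanh (β * (s + y)) - tanh (β * (t + y))| ≤ |β| * |s - t| := by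
    refine (abs_tanh_sub_tanh_le _ _).trans_eq ?_
    rw [← mul_sub, add_sub_add_right_eq_sub, abs_mul]
  filter_upwards [hμ.ae_forall_eventually_abs_integral_sub_le (f := fun t y => tanh (β * (t + y)))
    (fun t => (continuous_tanh.comp (by fun_prop)).measurable) (fun t y => (abs_tanh_lt_one _).le)
    (abs_nonneg β) hlip (m - 1) (m + 1)] with h hh α hα ε hε
  filter_upwards [hh _ hα ε hε] with n hn t ht
  rw [natCast_rpow_sub_one_pow]
  exact hn t ht

lemma scaledDeviation_rpow (m : ℝ) {α : ℝ} (hα : α ≠ 1) (n : ℕ) :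
    scaledDeviation m ((n : ℝ) ^ (α - 1)) =
      fun σ : Fin n → Bool => (mag σ - n * m) / (n : ℝ) ^ α := by
  funext σ
  rw [scaledDeviation]
  rcases eq_or_ne n 0 with rfl | hn
  · simp [mag, zero_rpow (sub_ne_zero.2 hα)]
  · have hn' : (n : ℝ) ≠ 0 := Nat.cast_ne_zero.2 hn
    rw [rpow_sub_one hn']
    field_simp

theorem mdp_conditioned_version_general
    (β : ℝ) (hβ : 0 < β) (ν : Measure ℝ) [IsProbabilityMeasure ν]
    (hν : Integrable (fun x : ℝ => x) ν)
    (μ : Measure (ℕ → ℝ)) [IsProbabilityMeasure μ] (hμ : IsProductMeasure ν μ)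
    (m : ℝ) (k : ℕ) (l : ℝ) (hmin : IsMinOfType β ν m k l) :
    ∃ A > (0 : ℝ), ∀ᵐ h ∂μ, ∀ a : ℝ, 0 < a → a < A →
      ∀ α : ℝ, 1 - 1 / (2 * (2 * (k : ℝ) - 1)) < α → α < 1 →
        HasLDP
          (fun n => ((gibbsMeasure β h n)[|{σ : Fin n → Bool |
              mag σ / n ∈ Set.Icc (m - a) (m + a)}]).map
            (fun σ => (mag σ - n * m) / (n : ℝ) ^ α))
          (fun n => (n : ℝ) ^ (1 - 2 * (k : ℝ) * (1 - α)))
          (mdpRate β l k) := by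
  obtain ⟨A, hA, hldp⟩ := hmin.exists_forall_hasLDP hβ hν
  refine ⟨A, hA, ?_⟩
  filter_upwards [hμ.ae_forall_isTypicalField β m k] with h hh a ha haA α hα hα1
  have hk : (1 : ℝ) ≤ k := by exact_mod_cast hmin.1
  have hα' : (1 - α) * (2 * (k : ℝ) - 1) < 1 / 2 := by
    rwa [← lt_div_iff₀ (by linarith), div_div, sub_lt_comm]
  have hspeed : 0 < 1 - 2 * (k : ℝ) * (1 - α) := by nlinarith
  have hcast : ((2 * k - 1 : ℕ) : ℝ) = 2 * k - 1 := by
    rw [Nat.cast_sub (by linarith [hmin.1]), Nat.cast_mul, Nat.cast_two, Nat.cast_one]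
  have := hldp _ h (isModerateScale_rpow hα1 hspeed) (hh α (by rwa [hcast])) a ha haA.le
  simp only [scaledDeviation_rpow m hα1.ne, magWindow] at this
  convert this using 2 with n
  rw [natCast_mul_rpow_sub_one_pow n (by push_cast; exact hspeed.ne'), Nat.cast_mul, Nat.cast_two]

end ModerateDeviations

/-- MDP, conditioned version (Theorem 3.3 of the paper). -/
theorem mdp_conditioned_version
    (β : ℝ) (hβ : 0 < β) (ν : Measure ℝ) [IsProbabilityMeasure ν]
    (hmom : Integrable (fun x : ℝ => x ^ 2) ν)
    (μ : Measure (ℕ → ℝ)) [IsProbabilityMeasure μ] (hμ : IsProductMeasure ν μ)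
    (m : ℝ) (k : ℕ) (l : ℝ) (hmin : IsMinOfType β ν m k l)
    (hcond : 2 * height β ν m / (broadness β ν m) ^ 2 < β) :
    ∀ᵐ h ∂μ, ∃ A > (0 : ℝ), ∀ a : ℝ, 0 < a → a < A →
      ∀ α : ℝ, 1 - 1 / (2 * (2 * (k : ℝ) - 1)) < α → α < 1 →
        HasLDP
          (fun n => ((gibbsMeasure β h n)[|{σ : Fin n → Bool |
              mag σ / n ∈ Set.Icc (m - a) (m + a)}]).map
            (fun σ => (mag σ - n * m) / (n : ℝ) ^ α))
          (fun n => (n : ℝ) ^ (1 - 2 * (k : ℝ) * (1 - α)))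
          (mdpRate β l k) := by
  have hν : Integrable (fun x : ℝ => x) ν :=
    ((memLp_two_iff_integrable_sq measurable_id.aestronglyMeasurable).2 hmom).integrable one_le_two
  obtain ⟨A, hA, hldp⟩ := mdp_conditioned_version_general β hβ ν hν μ hμ m k l hmin
  exact hldp.mono fun h hh => ⟨A, hA, hh⟩
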